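/- arXiv:1009.0639 — 3 statements merged into one kernel-verified Lean document; each statement's English description precedes it below -/
import Mathlib

section
/- There exists a dense Gδ subset R of P([0,1]^d) (with the weak topology) such that for every measure μ ∈ R and every real number h with 0 ≤ h ≤ d, the level set E_μ(h) is nonempty and its Hausdorff dimension satisfies dim_H E_μ(h) = h. -/
open MeasureTheory Metric Filter Set
open scoped ENNReal NNReal Topology

noncomputable section

/-- The unit cube `[0,1]^d` of `ℝ^d` equipped with the supremum metric,
viewed as a (compact) metric space. -/
abbrev Cube (d : ℕ) : Type := ↥(Set.Icc (0 : Fin d → ℝ) 1)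

/-- The local (lower) dimension `h_μ(x) = liminf_{r → 0⁺} log μ(B(x,r)) / log r`. -/
noncomputable def locDim {d : ℕ} (μ : Measure (Cube d)) (x : Cube d) : EReal :=
  Filter.liminf
    (fun r : ℝ => ENNReal.log (μ (Metric.ball x r)) / (Real.log r : EReal))
    (nhdsWithin 0 (Set.Ioi 0))

/-- The level set `E_μ(h) = {x : h_μ(x) = h}`. -/
def levelSet {d : ℕ} (μ : Measure (Cube d)) (h : ℝ) : Set (Cube d) :=
  {x | locDim μ x = (h : EReal)}

/-- The dyadic cube `I_{j,k} = ∏ᵢ [kᵢ 2^{-j}, (kᵢ+1) 2^{-j})`, as a subset of the cube. -/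
def dyadicCube (d j : ℕ) (k : Fin d → Fin (2 ^ j)) : Set (Cube d) :=
  {x | ∀ i, (k i : ℝ) / 2 ^ j ≤ (x : Fin d → ℝ) i ∧ (x : Fin d → ℝ) i < ((k i : ℝ) + 1) / 2 ^ j}

/-- `s_j(q) = Σ_{Q ∈ G_j, μ(Q) ≠ 0} μ(Q)^q`. -/
def dyadicSum {d : ℕ} (μ : Measure (Cube d)) (q : ℝ) (j : ℕ) : ℝ :=
  ∑ k ∈ Finset.univ.filter (fun k : Fin d → Fin (2 ^ j) => μ (dyadicCube d j k) ≠ 0),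
    (μ (dyadicCube d j k)).toReal ^ q

/-- The `L^q`-spectrum `τ_μ(q) = liminf_j -(1/j) log₂ s_j(q)`. -/
def lqSpectrum {d : ℕ} (μ : Measure (Cube d)) (q : ℝ) : EReal :=
  Filter.liminf
    (fun j : ℕ => ((-(1 / (j : ℝ)) * Real.logb 2 (dyadicSum μ q j) : ℝ) : EReal))
    Filter.atTop

/-- The convex combination of the staircase functions `y ↦ ⌊M (k + 1) * y⌋ / M (k + 1)` with
weights `W k - W (k + 1)`, completed by the multiple `lim W` of the identity. -/
def staircase (W M : ℕ → ℝ) (y : ℝ) : ℝ :=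
  y - ∑' k, (W k - W (k + 1)) * (Int.fract (M (k + 1) * y) / M (k + 1))

section Staircase

variable {W M : ℕ → ℝ}

lemma staircase_term_nonneg (hW : Antitone W) (hM1 : ∀ n, 1 ≤ M n) (y : ℝ) (k : ℕ) :
    0 ≤ (W k - W (k + 1)) * (Int.fract (M (k + 1) * y) / M (k + 1)) :=
  mul_nonneg (sub_nonneg.2 (hW k.le_succ))
    (div_nonneg (Int.fract_nonneg _) (by linarith [hM1 (k + 1)]))

lemma staircase_sum_tail_le (hW : Antitone W) (hWpos : ∀ n, 0 < W n) (hM : Monotone M)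
    (hM1 : ∀ n, 1 ≤ M n) (y : ℝ) (m n : ℕ) :
    ∑ k ∈ Finset.range n, (W (k + m) - W (k + m + 1)) *
      (Int.fract (M (k + m + 1) * y) / M (k + m + 1)) ≤ W m / M (m + 1) := by
  have hMm : 0 < M (m + 1) := by linarith [hM1 (m + 1)]
  calc ∑ k ∈ Finset.range n, (W (k + m) - W (k + m + 1)) *
        (Int.fract (M (k + m + 1) * y) / M (k + m + 1))
      ≤ ∑ k ∈ Finset.range n, (W (k + m) - W (k + 1 + m)) * (1 / M (m + 1)) := by
        refine Finset.sum_le_sum fun k _ => ?_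
        rw [show k + 1 + m = k + m + 1 by ring]
        refine mul_le_mul_of_nonneg_left ?_ (sub_nonneg.2 (hW (Nat.le_succ _)))
        have h1 : M (m + 1) ≤ M (k + m + 1) := hM (by omega)
        exact div_le_div₀ zero_le_one (Int.fract_lt_one _).le hMm h1
    _ = (W (0 + m) - W (n + m)) * (1 / M (m + 1)) := by
        rw [← Finset.sum_mul, Finset.sum_range_sub' (fun k => W (k + m))]
    _ ≤ W m / M (m + 1) := by
        rw [mul_one_div, zero_add]
        gcongr
        linarith [hWpos (n + m)]

lemma staircase_summable (hW : Antitone W) (hWpos : ∀ n, 0 < W n) (hM : Monotone M)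
    (hM1 : ∀ n, 1 ≤ M n) (y : ℝ) :
    Summable fun k => (W k - W (k + 1)) * (Int.fract (M (k + 1) * y) / M (k + 1)) :=
  summable_of_sum_range_le (staircase_term_nonneg hW hM1 y)
    (staircase_sum_tail_le hW hWpos hM hM1 y 0)

lemma staircase_split (hW : Antitone W) (hWpos : ∀ n, 0 < W n) (hW0 : W 0 = 1) (hM : Monotone M)
    (hM1 : ∀ n, 1 ≤ M n) (y : ℝ) (m : ℕ) :
    ∃ ρ, 0 ≤ ρ ∧ ρ ≤ W m / M (m + 1) ∧ staircase W M y =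
      ∑ k ∈ Finset.range m, (W k - W (k + 1)) * (⌊M (k + 1) * y⌋ / M (k + 1)) + W m * y - ρ := by
  refine ⟨∑' k, (W (k + m) - W (k + m + 1)) *
    (Int.fract (M (k + m + 1) * y) / M (k + m + 1)), tsum_nonneg fun k =>
      staircase_term_nonneg hW hM1 y (k + m), Real.tsum_le_of_sum_range_le (fun k =>
      staircase_term_nonneg hW hM1 y (k + m)) (staircase_sum_tail_le hW hWpos hM hM1 y m), ?_⟩
  rw [staircase, ← (staircase_summable hW hWpos hM hM1 y).sum_add_tsum_nat_add m]
  have h1 : ∑ k ∈ Finset.range m, (W k - W (k + 1)) * (⌊M (k + 1) * y⌋ / M (k + 1)) =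
      ∑ k ∈ Finset.range m, ((W k - W (k + 1)) * y -
        (W k - W (k + 1)) * (Int.fract (M (k + 1) * y) / M (k + 1))) := by
    refine Finset.sum_congr rfl fun k _ => ?_
    have : M (k + 1) ≠ 0 := by linarith [hM1 (k + 1)]
    rw [Int.fract]
    field_simp
    ring
  rw [h1, Finset.sum_sub_distrib, ← Finset.sum_mul, Finset.sum_range_sub', hW0]
  ring

lemma staircase_le (hW : Antitone W) (hM1 : ∀ n, 1 ≤ M n) (y : ℝ) : staircase W M y ≤ y := by
  have : 0 ≤ ∑' k, (W k - W (k + 1)) * (Int.fract (M (k + 1) * y) / M (k + 1)) :=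
    tsum_nonneg (staircase_term_nonneg hW hM1 y)
  rw [staircase]
  linarith

lemma staircase_nonneg (hW : Antitone W) (hWpos : ∀ n, 0 < W n) (hW0 : W 0 = 1)
    (hM1 : ∀ n, 1 ≤ M n) {y : ℝ} (hy : 0 ≤ y) : 0 ≤ staircase W M y := by
  rw [staircase, sub_nonneg]
  refine Real.tsum_le_of_sum_range_le (staircase_term_nonneg hW hM1 y) fun n => ?_
  calc _ ≤ ∑ k ∈ Finset.range n, (W k - W (k + 1)) * y := by
        refine Finset.sum_le_sum fun k _ => ?_
        refine mul_le_mul_of_nonneg_left ?_ (sub_nonneg.2 (hW (Nat.le_succ _)))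
        have h0 : 0 < M (k + 1) := by linarith [hM1 (k + 1)]
        rw [div_le_iff₀ h0, Int.fract]
        have : (0 : ℤ) ≤ ⌊M (k + 1) * y⌋ := Int.floor_nonneg.2 (by positivity)
        have : (0 : ℝ) ≤ ⌊M (k + 1) * y⌋ := by exact_mod_cast this
        linarith
    _ = (1 - W n) * y := by rw [← Finset.sum_mul, Finset.sum_range_sub', hW0]
    _ ≤ y := by nlinarith [hWpos n]

lemma staircase_sub_ge (hW : Antitone W) (hWpos : ∀ n, 0 < W n) (hW0 : W 0 = 1)
    (hM : Monotone M) (hM1 : ∀ n, 1 ≤ M n) {y z : ℝ} (hyz : y ≤ z) {m : ℕ}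
    (hm : 2 ≤ M (m + 1) * (z - y)) :
    W m * ((z - y) / 2) ≤ staircase W M z - staircase W M y := by
  obtain ⟨ρ, h0, -, hy⟩ := staircase_split hW hWpos hW0 hM hM1 y m
  obtain ⟨σ, -, h1, hz⟩ := staircase_split hW hWpos hW0 hM hM1 z m
  have hsum : ∑ k ∈ Finset.range m, (W k - W (k + 1)) * (⌊M (k + 1) * y⌋ / M (k + 1)) ≤
      ∑ k ∈ Finset.range m, (W k - W (k + 1)) * (⌊M (k + 1) * z⌋ / M (k + 1)) := by
    refine Finset.sum_le_sum fun k _ => ?_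
    refine mul_le_mul_of_nonneg_left ?_ (sub_nonneg.2 (hW (Nat.le_succ _)))
    have h0 : 0 < M (k + 1) := by linarith [hM1 (k + 1)]
    have : ⌊M (k + 1) * y⌋ ≤ ⌊M (k + 1) * z⌋ := by gcongr
    gcongr
  have hMm : 0 < M (m + 1) := by linarith [hM1 (m + 1)]
  have h2 : W m / M (m + 1) ≤ W m * ((z - y) / 2) := by
    rw [div_le_iff₀ hMm]
    nlinarith [hWpos m]
  rw [hy, hz]
  linarith

lemma abs_staircase_sub_le (hW : Antitone W) (hWpos : ∀ n, 0 < W n) (hW0 : W 0 = 1)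
    (hM : Monotone M) (hM1 : ∀ n, 1 ≤ M n) (y : ℝ) (m : ℕ) :
    |staircase W M y - (∑ k ∈ Finset.range m, (W k - W (k + 1)) *
      (⌊M (k + 1) * y⌋ / M (k + 1)) + W m * (⌊M (m + 1) * y⌋ / M (m + 1)))| ≤
      W (m + 1) / M (m + 1) := by
  obtain ⟨ρ, h0, h1, hy⟩ := staircase_split hW hWpos hW0 hM hM1 y (m + 1)
  have hMm : 0 < M (m + 1) := by linarith [hM1 (m + 1)]
  have hM2 : W (m + 1) / M (m + 1 + 1) ≤ W (m + 1) / M (m + 1) :=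
    div_le_div_of_nonneg_left (hWpos _).le hMm (hM (Nat.le_succ _))
  have h2 : W (m + 1) * y - W (m + 1) * (⌊M (m + 1) * y⌋ / M (m + 1)) =
      W (m + 1) / M (m + 1) * Int.fract (M (m + 1) * y) := by
    rw [Int.fract]
    field_simp
  have h3 : 0 ≤ W (m + 1) / M (m + 1) := div_nonneg (hWpos _).le hMm.le
  have h4 := mul_le_of_le_one_right h3 (Int.fract_lt_one (M (m + 1) * y)).le
  have h5 := mul_nonneg h3 (Int.fract_nonneg (M (m + 1) * y))
  rw [hy, Finset.sum_range_succ, abs_le]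
  constructor <;> linarith

end Staircase

section LocalDimension

lemma ofReal_rpow_le_of_log_div_lt {m : ℝ≥0∞} {r t : ℝ} (hr0 : 0 < r) (hr1 : r < 1)
    (h : ENNReal.log m / (Real.log r : EReal) < t) : ENNReal.ofReal (r ^ t) ≤ m := by
  have hlog : Real.log r < 0 := Real.log_neg hr0 hr1
  rcases eq_or_ne m ⊤ with rfl | htop
  · exact le_top
  rcases eq_or_ne m 0 with rfl | h0
  · rw [ENNReal.log_zero, EReal.bot_div_of_neg_ne_bot (by exact_mod_cast hlog)
      (EReal.coe_ne_bot _)] at h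
    exact absurd h (not_lt.2 le_top)
  · rw [ENNReal.log_pos_real h0 htop, ← EReal.coe_div, EReal.coe_lt_coe_iff,
      div_lt_iff_of_neg hlog] at h
    have hm : 0 < m.toReal := ENNReal.toReal_pos h0 htop
    rw [ENNReal.ofReal_le_iff_le_toReal htop, ← Real.log_le_log_iff (by positivity) hm,
      Real.log_rpow hr0]
    exact h.le

lemma log_div_le_of_ofReal_le {m : ℝ≥0∞} {r c t : ℝ} (hr0 : 0 < r) (hr1 : r < 1) (hc : 0 < c)
    (hcm : ENNReal.ofReal c ≤ m) (hm : m ≤ 1) (h : t * Real.log r ≤ Real.log c) :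
    ENNReal.log m / (Real.log r : EReal) ≤ t := by
  have hlog : Real.log r < 0 := Real.log_neg hr0 hr1
  have htop : m ≠ ⊤ := ne_top_of_le_ne_top ENNReal.one_ne_top hm
  have h0 : m ≠ 0 := ((ENNReal.ofReal_pos.2 hc).trans_le hcm).ne'
  rw [ENNReal.log_pos_real h0 htop, ← EReal.coe_div, EReal.coe_le_coe_iff,
    div_le_iff_of_neg hlog]
  exact h.trans (Real.log_le_log hc ((ENNReal.ofReal_le_iff_le_toReal htop).1 hcm))

lemma log_div_nonneg_of_le_one {m : ℝ≥0∞} {r : ℝ} (hr0 : 0 < r) (hr1 : r < 1) (hm : m ≤ 1) :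
    0 ≤ ENNReal.log m / (Real.log r : EReal) := by
  have hlog : Real.log r < 0 := Real.log_neg hr0 hr1
  rcases eq_or_ne m 0 with rfl | h0
  · rw [ENNReal.log_zero, EReal.bot_div_of_neg_ne_bot (by exact_mod_cast hlog)
      (EReal.coe_ne_bot _)]
    exact le_top
  · have htop : m ≠ ⊤ := ne_top_of_le_ne_top ENNReal.one_ne_top hm
    rw [ENNReal.log_pos_real h0 htop, ← EReal.coe_div]
    have : m.toReal ≤ 1 := by simpa using ENNReal.toReal_mono ENNReal.one_ne_top hm
    exact_mod_cast div_nonneg_of_nonpos (Real.log_nonpos ENNReal.toReal_nonneg this) hlog.le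

variable {d : ℕ}

lemma locDim_nonneg (μ : Measure (Cube d)) [IsProbabilityMeasure μ] (x : Cube d) :
    0 ≤ locDim μ x := by
  refine le_liminf_of_le (by isBoundedDefault) ?_
  filter_upwards [Ioo_mem_nhdsGT (zero_lt_one' ℝ)] with r hr
  exact log_div_nonneg_of_le_one hr.1 hr.2 prob_le_one

lemma locDim_le_of_seq (μ : Measure (Cube d)) [IsProbabilityMeasure μ] (x : Cube d)
    (h : ℝ) (r c : ℕ → ℝ) (hr0 : ∀ n, 0 < r n) (hr : Tendsto r atTop (𝓝 0))
    (hc : ∀ n, 0 < c n) (hμ : ∀ n, ENNReal.ofReal (c n) ≤ μ (ball x (r n)))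
    (hlog : ∀ n : ℕ, (h + 1 / ((n : ℝ) + 1)) * Real.log (r n) ≤ Real.log (c n)) :
    locDim μ x ≤ h := by
  refine EReal.le_of_forall_lt_iff_le.1 fun t ht => ?_
  have ht : h < t := by exact_mod_cast ht
  refine liminf_le_of_frequently_le ?_ (by isBoundedDefault)
  have htend : Tendsto r atTop (𝓝[>] 0) :=
    tendsto_nhdsWithin_iff.2 ⟨hr, Eventually.of_forall hr0⟩
  refine htend.frequently (Eventually.frequently ?_)
  filter_upwards [hr.eventually_lt_const zero_lt_one,
    (tendsto_one_div_add_atTop_nhds_zero_nat (𝕜 := ℝ)).eventually_lt_const (sub_pos.2 ht)]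
    with n hn1 hn2
  refine log_div_le_of_ofReal_le (hr0 n) hn1 (hc n) (hμ n) prob_le_one ?_
  have := Real.log_neg (hr0 n) hn1
  refine le_trans ?_ (hlog n)
  nlinarith

/-- A set of points around which a probability measure has arbitrarily small balls of mass at least
`r ^ t` has finite `t`-dimensional Hausdorff measure. -/
lemma hausdorffMeasure_locDim_lt_ne_top (μ : Measure (Cube d)) [IsProbabilityMeasure μ] {t : ℝ}
    (ht : 0 < t) : μH[t] {x | locDim μ x < t} ≠ ⊤ := by
  have key : ∀ ε : ℝ, 0 < ε → ∀ x : {x | locDim μ x < t}, ∃ r : ℝ, 0 < r ∧ r ≤ ε ∧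
      ENNReal.ofReal (r ^ t) ≤ μ (ball (x : Cube d) r) := by
    intro ε hε x
    have hx : locDim μ x < t := x.2
    have := frequently_lt_of_liminf_lt (by isBoundedDefault) hx
    obtain ⟨r, hr, hr'⟩ := (this.and_eventually
      (Ioo_mem_nhdsGT (lt_min hε zero_lt_one))).exists
    exact ⟨r, hr'.1, (hr'.2.trans_le (min_le_left _ _)).le,
      ofReal_rpow_le_of_log_div_lt hr'.1 (hr'.2.trans_le (min_le_right _ _)) hr⟩
  have hε : ∀ n : ℕ, (0 : ℝ) < 1 / ((n : ℝ) + 1) := fun n => by positivity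
  choose r hr0 hrε hrμ using fun n : ℕ => key _ (hε n)
  have vit := fun n : ℕ => Vitali.exists_disjoint_subfamily_covering_enlargement_closedBall
    (univ : Set {x | locDim μ x < t}) (fun x => (x : Cube d)) (r n) (1 / ((n : ℝ) + 1))
    (fun a _ => hrε n a) 5 (by norm_num)
  choose u _ hdisj hcov using vit
  have hdisj' : ∀ n, Pairwise (Function.onFun Disjoint
      fun a : u n => ball ((a : {x | locDim μ x < t}) : Cube d) (r n a)) := by
    intro n a b hab
    exact (hdisj n a.2 b.2 (fun h => hab (Subtype.ext h))).mono ball_subset_closedBall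
      ball_subset_closedBall
  have hsum : ∀ n, ∑' a : u n, ENNReal.ofReal (r n a ^ t) ≤ 1 := fun n =>
    calc ∑' a : u n, ENNReal.ofReal (r n a ^ t)
        ≤ ∑' a : u n, μ (ball ((a : {x | locDim μ x < t}) : Cube d) (r n a)) :=
          ENNReal.tsum_le_tsum fun a => hrμ n a
      _ ≤ μ univ := tsum_measure_le_measure_univ
          (fun a => isOpen_ball.measurableSet.nullMeasurableSet)
          (fun a b hab => (hdisj' n hab).aedisjoint)
      _ = 1 := measure_univ
  have hcount : ∀ n, Countable (u n) := fun n => by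
    have h1 := Summable.countable_support_ennreal (ne_top_of_le_ne_top ENNReal.one_ne_top (hsum n))
    rw [← countable_univ_iff]
    convert h1
    refine (Function.support_eq_univ fun a => ?_).symm
    exact (ENNReal.ofReal_pos.2 (Real.rpow_pos_of_pos (hr0 n a) t)).ne'
  have hdiam : ∀ n (a : u n), ediam (closedBall ((a : {x | locDim μ x < t}) : Cube d)
      (5 * r n a)) ≤ ENNReal.ofReal (10 * r n a) := by
    intro n a
    have h5 : 0 ≤ 5 * r n a := by linarith [hr0 n a]
    refine ediam_le_of_forall_dist_le fun y hy z hz => ?_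
    rw [mem_closedBall] at hy hz
    linarith [dist_triangle_right y z ((a : {x | locDim μ x < t}) : Cube d)]
  have hlim : Tendsto (fun n : ℕ => ENNReal.ofReal (10 * (1 / ((n : ℝ) + 1)))) atTop (𝓝 0) := by
    have := (tendsto_one_div_add_atTop_nhds_zero_nat (𝕜 := ℝ)).const_mul 10
    rw [mul_zero] at this
    simpa using ENNReal.tendsto_ofReal this
  have hle := Measure.hausdorffMeasure_le_liminf_tsum t {x | locDim μ x < t} _ hlim
    (fun n (a : u n) => closedBall ((a : {x | locDim μ x < t}) : Cube d) (5 * r n a))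
    (Eventually.of_forall fun n a => (hdiam n a).trans
      (ENNReal.ofReal_le_ofReal (by linarith [hrε n a])))
    (Eventually.of_forall fun n x hx => by
      obtain ⟨b, hb, hsub⟩ := hcov n ⟨x, hx⟩ trivial
      exact mem_iUnion.2 ⟨⟨b, hb⟩, hsub (mem_closedBall_self (hr0 n _).le)⟩)
  refine ne_top_of_le_ne_top ?_ (hle.trans (liminf_le_of_frequently_le
    (a := ENNReal.ofReal (10 ^ t)) (Eventually.frequently (Eventually.of_forall fun n => ?_))
    (by isBoundedDefault)))
  · exact ENNReal.ofReal_ne_top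
  calc ∑' a : u n, ediam (closedBall ((a : {x | locDim μ x < t}) : Cube d) (5 * r n a)) ^ t
      ≤ ∑' a : u n, ENNReal.ofReal (10 ^ t) * ENNReal.ofReal (r n a ^ t) := by
        refine ENNReal.tsum_le_tsum fun a => ?_
        refine (ENNReal.rpow_le_rpow (hdiam n a) ht.le).trans_eq ?_
        have := hr0 n a
        rw [ENNReal.ofReal_rpow_of_nonneg (by positivity) ht.le,
          Real.mul_rpow (by norm_num) this.le, ENNReal.ofReal_mul (by positivity)]
    _ ≤ ENNReal.ofReal (10 ^ t) := by
        rw [ENNReal.tsum_mul_left]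
        exact mul_le_of_le_one_right' (hsum n)

lemma dimH_levelSet_le (μ : Measure (Cube d)) [IsProbabilityMeasure μ] {h : ℝ} (hh : 0 ≤ h) :
    dimH (levelSet μ h) ≤ ENNReal.ofReal h := by
  refine ENNReal.le_of_forall_pos_le_add fun ε hε _ => ?_
  have hpos : 0 < h + ε := by positivity
  have h1 : levelSet μ h ⊆ {x | locDim μ x < ((h + ε : ℝ) : EReal)} := fun x hx => by
    rw [levelSet, mem_ofPred_eq] at hx
    rw [mem_ofPred_eq, hx, EReal.coe_lt_coe_iff]
    simpa using hε
  have h2 := hausdorffMeasure_locDim_lt_ne_top μ hpos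
  refine (dimH_mono h1).trans ((dimH_le_of_hausdorffMeasure_ne_top
    (d := (h + ε).toNNReal) (by rwa [Real.coe_toNNReal _ hpos.le])).trans ?_)
  change ENNReal.ofReal (h + ε) ≤ _
  exact ENNReal.ofReal_add_le.trans_eq (by rw [ENNReal.ofReal_coe_nnreal])

lemma hausdorffMeasure_locDim_lt_eq_zero (μ : Measure (Cube d)) [IsProbabilityMeasure μ]
    (h : ℝ) : μH[h] {x | locDim μ x < h} = 0 := by
  have hsub : {x | locDim μ x < h} ⊆
      ⋃ q : {q : ℚ // 0 < (q : ℝ) ∧ (q : ℝ) < h}, {x | locDim μ x < ((q : ℝ) : EReal)} := by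
    intro x hx
    obtain ⟨q, hq1, hq2⟩ := EReal.exists_rat_btwn_of_lt (mem_ofPred_eq ▸ hx)
    have h0 := (locDim_nonneg μ x).trans_lt hq1
    exact mem_iUnion.2 ⟨⟨q, by exact_mod_cast h0, by exact_mod_cast hq2⟩, hq1⟩
  refine measure_mono_null hsub (measure_iUnion_null fun q => ?_)
  exact (Measure.hausdorffMeasure_zero_or_top q.2.2 _).resolve_right
    (hausdorffMeasure_locDim_lt_ne_top μ q.2.1)

lemma levelSet_nonempty_and_dimH (μ : Measure (Cube d)) [IsProbabilityMeasure μ] {h : ℝ}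
    (hh : 0 < h) (hpos : μH[h] {x | locDim μ x ≤ h} ≠ 0) :
    (levelSet μ h).Nonempty ∧ dimH (levelSet μ h) = ENNReal.ofReal h := by
  have h1 : {x | locDim μ x ≤ h} ⊆ levelSet μ h ∪ {x | locDim μ x < h} := fun x hx =>
    (le_iff_eq_or_lt.1 hx)
  have h2 : μH[h] (levelSet μ h) ≠ 0 := fun h0 => hpos <| measure_mono_null h1 <|
    measure_union_null h0 (hausdorffMeasure_locDim_lt_eq_zero μ h)
  refine ⟨nonempty_of_measure_ne_zero h2, (dimH_levelSet_le μ hh.le).antisymm ?_⟩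
  exact le_dimH_of_hausdorffMeasure_ne_zero (d := h.toNNReal) (by rwa [Real.coe_toNNReal _ hh.le])

end LocalDimension

section TypicalMeasures

/-- The point of the grid of mesh `2 ^ (-j)` with index `k`. -/
def gridPoint (d j : ℕ) (k : Fin d → Fin (2 ^ j + 1)) : Cube d :=
  ⟨fun i => (k i : ℝ) / 2 ^ j, fun _ => by simp only [Pi.zero_apply]; positivity, fun i => by
    have h : (k i : ℕ) ≤ 2 ^ j := Nat.lt_succ_iff.1 (k i).2
    have h' : (k i : ℝ) ≤ 2 ^ j := by exact_mod_cast h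
    simpa using div_le_one_of_le₀ h' (by positivity)⟩

/-- The probability measures giving mass more than `2 ^ (-j (d + 1 / (m + 1)))` to the ball of radius
`2 ^ (-j ^ 2)` around each point of the grid of mesh `2 ^ (-j)`. -/
def gridCharging (d j m : ℕ) : Set (ProbabilityMeasure (Cube d)) :=
  {μ | ∀ k, ENNReal.ofReal (2 ^ (-((j : ℝ) * (d + 1 / ((m : ℝ) + 1))))) <
    (μ : Measure (Cube d)) (ball (gridPoint d j k) (2 ^ (-(j : ℝ) ^ 2)))}

lemma isOpen_setOf_lt_measure {X : Type*} [MeasurableSpace X] [TopologicalSpace X]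
    [OpensMeasurableSpace X] [HasOuterApproxClosed X] (c : ℝ≥0∞) {G : Set X} (hG : IsOpen G) :
    IsOpen {μ : ProbabilityMeasure X | c < (μ : Measure X) G} := by
  rw [isOpen_iff_mem_nhds]
  intro μ hμ
  exact eventually_lt_of_lt_liminf (lt_of_lt_of_le hμ
    (ProbabilityMeasure.le_liminf_measure_open_of_tendsto tendsto_id hG)) (by isBoundedDefault)

lemma isOpen_gridCharging (d j m : ℕ) : IsOpen (gridCharging d j m) := by
  rw [gridCharging, ofPred_forall]
  exact isOpen_iInter_of_finite fun k => isOpen_setOf_lt_measure _ isOpen_ball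

lemma exists_probabilityMeasure_inv_card_le {X ι : Type*} [MeasurableSpace X] [Fintype ι]
    [Nonempty ι] (x : ι → X) : ∃ σ : ProbabilityMeasure X, ∀ i s, x i ∈ s →
      (Fintype.card ι : ℝ≥0∞)⁻¹ ≤ (σ : Measure X) s := by
  have hcard : (Fintype.card ι : ℝ≥0∞) ≠ 0 := by simp
  refine ⟨⟨∑ i, (Fintype.card ι : ℝ≥0∞)⁻¹ • Measure.dirac (x i), ⟨?_⟩⟩, fun i s hi => ?_⟩
  · simp [ENNReal.mul_inv_cancel hcard]
  · simp only [ProbabilityMeasure.coe_mk, Measure.coe_finsetSum, Finset.sum_apply,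
      Measure.smul_apply, smul_eq_mul]
    refine le_trans ?_ (Finset.single_le_sum (fun _ _ => zero_le) (Finset.mem_univ i))
    rw [Measure.dirac_apply_of_mem hi, mul_one]

lemma exists_tendsto_mixture {X : Type*} [MeasurableSpace X] [TopologicalSpace X]
    [OpensMeasurableSpace X] (ν : ProbabilityMeasure X) (σ : ℕ → ProbabilityMeasure X)
    {t : ℕ → ℝ} (ht0 : ∀ n, 0 ≤ t n) (ht1 : ∀ n, t n ≤ 1) (ht : Tendsto t atTop (𝓝 0)) :
    ∃ κ : ℕ → ProbabilityMeasure X, Tendsto κ atTop (𝓝 ν) ∧ ∀ n s,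
      ENNReal.ofReal (t n) * (σ n : Measure X) s ≤ (κ n : Measure X) s := by
  refine ⟨fun n => ⟨ENNReal.ofReal (1 - t n) • (ν : Measure X) +
    ENNReal.ofReal (t n) • (σ n : Measure X), ⟨?_⟩⟩, ?_, fun n s => ?_⟩
  · simp [← ENNReal.ofReal_add (sub_nonneg.2 (ht1 n)) (ht0 n)]
  · refine ProbabilityMeasure.tendsto_iff_forall_integral_tendsto.2 fun f => ?_
    have h1 : ∀ n, ∫ x, f x ∂(ENNReal.ofReal (1 - t n) • (ν : Measure X) +
        ENNReal.ofReal (t n) • (σ n : Measure X)) =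
        (1 - t n) * ∫ x, f x ∂(ν : Measure X) + t n * ∫ x, f x ∂(σ n : Measure X) := fun n => by
      rw [integral_add_measure ((f.integrable _).smul_measure ENNReal.ofReal_ne_top)
        ((f.integrable _).smul_measure ENNReal.ofReal_ne_top), integral_smul_measure,
        integral_smul_measure, ENNReal.toReal_ofReal (ht0 n),
        ENNReal.toReal_ofReal (sub_nonneg.2 (ht1 n)), smul_eq_mul, smul_eq_mul]
    have h2 : Tendsto (fun n => t n * ∫ x, f x ∂(σ n : Measure X)) atTop (𝓝 0) := by
      refine squeeze_zero_norm (a := fun n => t n * ‖f‖) (fun n => ?_) (by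
        simpa using ht.mul_const ‖f‖)
      rw [norm_mul, Real.norm_of_nonneg (ht0 n)]
      exact mul_le_mul_of_nonneg_left (f.norm_integral_le_norm _) (ht0 n)
    have h3 := ((ht.const_sub 1).mul_const (∫ x, f x ∂(ν : Measure X))).add h2
    simp only [sub_zero, one_mul, add_zero] at h3
    exact h3.congr fun n => (h1 n).symm
  · simp only [ProbabilityMeasure.coe_mk, Measure.add_apply, Measure.smul_apply, smul_eq_mul]
    exact le_add_self

lemma dense_iUnion_gridCharging (d m : ℕ) : Dense (⋃ j ≥ m, gridCharging d j m) := by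
  intro ν
  choose σ hσ using fun j => exists_probabilityMeasure_inv_card_le (gridPoint d j)
  have hm : (0 : ℝ) < 1 / (2 * ((m : ℝ) + 1)) := by positivity
  have hexp : Tendsto (fun j : ℕ => -((j : ℝ) * (1 / (2 * ((m : ℝ) + 1))))) atTop atBot :=
    tendsto_neg_atTop_atBot.comp (tendsto_natCast_atTop_atTop.atTop_mul_const hm)
  obtain ⟨κ, hκ, hκσ⟩ := exists_tendsto_mixture ν σ
    (t := fun j => (2 : ℝ) ^ (-((j : ℝ) * (1 / (2 * ((m : ℝ) + 1)))))) (fun j => by positivity)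
    (fun j => Real.rpow_le_one_of_one_le_of_nonpos one_le_two (by
      rw [neg_nonpos]; positivity))
    ((tendsto_rpow_atBot_of_base_gt_one 2 one_lt_two).comp hexp)
  refine mem_closure_of_tendsto hκ ?_
  filter_upwards [eventually_ge_atTop m, hexp.eventually_lt_atBot (-(d : ℝ))] with j hj hjd
  refine mem_biUnion hj fun k => ?_
  refine lt_of_lt_of_le ?_ ((mul_le_mul_right (hσ j k _ (mem_ball_self (by positivity))) _).trans
    (hκσ j _))
  have hcard : (Fintype.card (Fin d → Fin (2 ^ j + 1)) : ℝ≥0∞)⁻¹ =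
      ENNReal.ofReal ((((2 : ℝ) ^ j + 1) ^ d)⁻¹) := by
    rw [ENNReal.ofReal_inv_of_pos (by positivity), ENNReal.ofReal_pow (by positivity),
      ENNReal.ofReal_add (by positivity) zero_le_one, ENNReal.ofReal_pow zero_le_two]
    simp
  rw [hcard, ← ENNReal.ofReal_mul (by positivity), ENNReal.ofReal_lt_ofReal_iff (by positivity)]
  have h1 : ((2 : ℝ) ^ j + 1) ^ d ≤ 2 ^ (((j : ℝ) + 1) * d) := by
    rw [Real.rpow_mul zero_le_two, Real.rpow_natCast]
    have : (2 : ℝ) ^ ((j : ℝ) + 1) = 2 ^ j + 2 ^ j := by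
      rw [Real.rpow_add two_pos, Real.rpow_natCast, Real.rpow_one]; ring
    rw [this]
    gcongr
    exact one_le_pow₀ one_le_two
  calc (2 : ℝ) ^ (-((j : ℝ) * (d + 1 / ((m : ℝ) + 1))))
      < 2 ^ (-((j : ℝ) * (1 / (2 * ((m : ℝ) + 1)))) + -(((j : ℝ) + 1) * d)) := by
        refine Real.rpow_lt_rpow_of_exponent_lt one_lt_two ?_
        have : 1 / ((m : ℝ) + 1) = 2 * (1 / (2 * ((m : ℝ) + 1))) := by field_simp
        rw [this]
        linarith
    _ = 2 ^ (-((j : ℝ) * (1 / (2 * ((m : ℝ) + 1))))) * (2 ^ (((j : ℝ) + 1) * d))⁻¹ := by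
        rw [Real.rpow_add two_pos, Real.rpow_neg zero_le_two (((j : ℝ) + 1) * d)]
    _ ≤ _ := by gcongr

/-- The measures which charge, for every `m`, some grid of mesh `2 ^ (-j)` with `j ≥ m`. -/
def typicalMeasures (d : ℕ) : Set (ProbabilityMeasure (Cube d)) :=
  ⋂ m, ⋃ j ≥ m, gridCharging d j m

lemma isOpen_iUnion_gridCharging (d m : ℕ) : IsOpen (⋃ j ≥ m, gridCharging d j m) :=
  isOpen_biUnion fun j _ => isOpen_gridCharging d j m

lemma isGδ_typicalMeasures (d : ℕ) : IsGδ (typicalMeasures d) :=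
  IsGδ.iInter_of_isOpen (isOpen_iUnion_gridCharging d)

lemma dense_typicalMeasures (d : ℕ) : Dense (typicalMeasures d) :=
  dense_iInter_of_isOpen_nat (isOpen_iUnion_gridCharging d) (dense_iUnion_gridCharging d)

lemma exists_mem_gridCharging {d : ℕ} {μ : ProbabilityMeasure (Cube d)}
    (hμ : μ ∈ typicalMeasures d) (m : ℕ) : ∃ j ≥ m, μ ∈ gridCharging d j m := by
  simpa [typicalMeasures] using mem_iInter.1 hμ m

end TypicalMeasures

section DyadicStaircase

/-- The staircase function which inserts blocks of zeros in binary expansions: the `a (k + 1)`-th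
binary digit of `y` is followed by `Z (k + 1) - Z k` zeros. -/
def dyadicStaircase (a Z : ℕ → ℕ) : ℝ → ℝ :=
  staircase (fun n => ((2 : ℝ) ^ Z n)⁻¹) (fun n => (2 : ℝ) ^ a n)

variable {a Z : ℕ → ℕ}

lemma antitone_inv_two_pow (hZ : Monotone Z) : Antitone fun n => ((2 : ℝ) ^ Z n)⁻¹ :=
  fun _ _ hmn => inv_anti₀ (by positivity) (pow_le_pow_right₀ one_le_two (hZ hmn))

lemma monotone_two_pow (ha : Monotone a) : Monotone fun n => (2 : ℝ) ^ a n :=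
  fun _ _ hmn => pow_le_pow_right₀ one_le_two (ha hmn)

lemma one_le_two_pow_real (n : ℕ) : (1 : ℝ) ≤ 2 ^ a n := one_le_pow₀ one_le_two

lemma dyadicStaircase_mem_Icc (hZ : Monotone Z) (hZ0 : Z 0 = 0) {y : ℝ} (hy : y ∈ Icc (0 : ℝ) 1) :
    dyadicStaircase a Z y ∈ Icc (0 : ℝ) 1 :=
  ⟨staircase_nonneg (antitone_inv_two_pow hZ) (fun n => by positivity) (by simp [hZ0])
    one_le_two_pow_real hy.1,
    (staircase_le (antitone_inv_two_pow hZ) one_le_two_pow_real y).trans hy.2⟩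

lemma exists_abs_dyadicStaircase_sub_le (ha : Monotone a) (hZ : Monotone Z) (hZ0 : Z 0 = 0)
    {y : ℝ} (hy : y ∈ Icc (0 : ℝ) 1) (m : ℕ) :
    ∃ k : Fin (2 ^ (a (m + 1) + Z m) + 1),
      |dyadicStaircase a Z y - (k : ℝ) / 2 ^ (a (m + 1) + Z m)| ≤
        ((2 : ℝ) ^ (a (m + 1) + Z (m + 1)))⁻¹ := by
  have hy0 := hy.1
  have key := abs_staircase_sub_le (antitone_inv_two_pow hZ) (fun n => by positivity)
    (by simp [hZ0]) (monotone_two_pow ha) one_le_two_pow_real y m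
  set G : ℝ := ∑ k ∈ Finset.range m, (((2 : ℝ) ^ Z k)⁻¹ - ((2 : ℝ) ^ Z (k + 1))⁻¹) *
      (⌊(2 : ℝ) ^ a (k + 1) * y⌋ / 2 ^ a (k + 1)) +
      ((2 : ℝ) ^ Z m)⁻¹ * (⌊(2 : ℝ) ^ a (m + 1) * y⌋ / 2 ^ a (m + 1)) with hG
  have hfl0 : ∀ k, 0 ≤ (⌊(2 : ℝ) ^ a k * y⌋ : ℝ) := fun k => by
    exact_mod_cast Int.floor_nonneg.2 (by positivity)
  have hfl1 : ∀ k, (⌊(2 : ℝ) ^ a k * y⌋ : ℝ) / 2 ^ a k ≤ y := fun k => by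
    rw [div_le_iff₀ (by positivity), mul_comm]
    exact Int.floor_le _
  have hW : ∀ k, 0 ≤ ((2 : ℝ) ^ Z k)⁻¹ - ((2 : ℝ) ^ Z (k + 1))⁻¹ := fun k =>
    sub_nonneg.2 (antitone_inv_two_pow hZ k.le_succ)
  have hG0 : 0 ≤ G := add_nonneg (Finset.sum_nonneg fun k _ => mul_nonneg (hW k)
    (div_nonneg (hfl0 _) (by positivity))) (mul_nonneg (by positivity)
    (div_nonneg (hfl0 _) (by positivity)))
  have hG1 : G ≤ 1 := by
    calc G ≤ ∑ k ∈ Finset.range m, (((2 : ℝ) ^ Z k)⁻¹ - ((2 : ℝ) ^ Z (k + 1))⁻¹) * y +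
          ((2 : ℝ) ^ Z m)⁻¹ * y := by
          refine add_le_add (Finset.sum_le_sum fun k _ => ?_) ?_
          · exact mul_le_mul_of_nonneg_left (hfl1 _) (hW k)
          · exact mul_le_mul_of_nonneg_left (hfl1 _) (by positivity)
      _ = y := by
          rw [← Finset.sum_mul, Finset.sum_range_sub' fun k => ((2 : ℝ) ^ Z k)⁻¹, hZ0]
          ring
      _ ≤ 1 := hy.2
  have hint : ∃ g : ℤ, G * 2 ^ (a (m + 1) + Z m) = g := by
    refine ⟨∑ k ∈ Finset.range m, (2 ^ (Z m - Z k) - 2 ^ (Z m - Z (k + 1))) *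
      (⌊(2 : ℝ) ^ a (k + 1) * y⌋ * 2 ^ (a (m + 1) - a (k + 1))) +
      ⌊(2 : ℝ) ^ a (m + 1) * y⌋, ?_⟩
    rw [hG, add_mul, Finset.sum_mul]
    push_cast
    congr 1
    · refine Finset.sum_congr rfl fun k hk => ?_
      have hk : k < m := Finset.mem_range.1 hk
      have h1 : Z k ≤ Z m := hZ hk.le
      have h2 : Z (k + 1) ≤ Z m := hZ hk
      have h3 : a (k + 1) ≤ a (m + 1) := ha (by omega)
      rw [pow_sub₀ _ two_ne_zero h1, pow_sub₀ _ two_ne_zero h2, pow_sub₀ _ two_ne_zero h3, pow_add]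
      field_simp
    · rw [pow_add]
      field_simp
  obtain ⟨g, hg⟩ := hint
  have hg0 : 0 ≤ g := by
    have : (0 : ℝ) ≤ g := hg ▸ by positivity
    exact_mod_cast this
  lift g to ℕ using hg0
  have hg1 : g ≤ 2 ^ (a (m + 1) + Z m) := by
    have : (g : ℝ) ≤ 2 ^ (a (m + 1) + Z m) := by
      rw [← Int.cast_natCast, ← hg]
      exact mul_le_of_le_one_left (by positivity) hG1
    exact_mod_cast this
  refine ⟨⟨g, Nat.lt_succ_iff.2 hg1⟩, ?_⟩
  have : (g : ℝ) / 2 ^ (a (m + 1) + Z m) = G := by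
    rw [div_eq_iff (by positivity), hg, Int.cast_natCast]
  rw [this]
  refine key.trans_eq ?_
  rw [pow_add, mul_inv, div_eq_mul_inv, mul_comm]

lemma rpow_le_dyadicStaircase_sub (ha : StrictMono a) (ha0 : a 0 = 0) (hZ : Monotone Z)
    (hZ0 : Z 0 = 0) {β : ℝ} (hβ : 0 ≤ β) (hZβ : ∀ n, (Z n : ℝ) ≤ β * a n) {y z : ℝ} (hyz : y ≤ z)
    (hz : z ≤ y + 1) :
    ((z - y) / 2) ^ (β + 1) ≤ dyadicStaircase a Z z - dyadicStaircase a Z y := by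
  rcases hyz.eq_or_lt with rfl | hlt
  · simp [Real.zero_rpow (by positivity : β + 1 ≠ 0)]
  have hδ : 0 < z - y := sub_pos.2 hlt
  have hex : ∃ m, 2 ≤ (2 : ℝ) ^ a (m + 1) * (z - y) := by
    obtain ⟨n, hn⟩ := pow_unbounded_of_one_lt (2 / (z - y)) one_lt_two
    refine ⟨n, ?_⟩
    rw [div_lt_iff₀ hδ] at hn
    refine hn.le.trans (mul_le_mul_of_nonneg_right ?_ hδ.le)
    exact pow_le_pow_right₀ one_le_two (n.le_succ.trans (ha.le_apply))
  classical
  set m := Nat.find hex with hm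
  have hm1 : (2 : ℝ) ^ a m * (z - y) ≤ 2 := by
    rcases Nat.eq_zero_or_eq_succ_pred m with h0 | hs
    · rw [h0, ha0, pow_zero, one_mul]
      linarith
    · have := Nat.find_min hex (m := m.pred) (by omega)
      rw [← Nat.succ_eq_add_one, ← hs] at this
      exact (not_le.1 this).le
  refine le_trans ?_ (staircase_sub_ge (antitone_inv_two_pow hZ) (fun n => by positivity)
    (by simp [hZ0]) (monotone_two_pow ha.monotone) one_le_two_pow_real hyz (Nat.find_spec hex))
  rw [Real.rpow_add_one (by positivity)]
  refine mul_le_mul_of_nonneg_right ?_ (by positivity)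
  calc ((z - y) / 2) ^ β ≤ (((2 : ℝ) ^ a m)⁻¹) ^ β := by
        refine Real.rpow_le_rpow (by positivity) ?_ hβ
        rw [le_inv_comm₀ (by positivity) (by positivity), inv_div, le_div_iff₀ hδ]
        exact hm1
    _ = ((2 : ℝ) ^ (β * a m))⁻¹ := by
        rw [Real.inv_rpow (by positivity), ← Real.rpow_natCast, ← Real.rpow_mul zero_le_two,
          mul_comm]
    _ ≤ ((2 : ℝ) ^ Z m)⁻¹ := by
        refine inv_anti₀ (by positivity) ?_
        rw [← Real.rpow_natCast]
        exact Real.rpow_le_rpow_of_exponent_le one_le_two (hZβ m)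

end DyadicStaircase

section Spectrum

variable {d : ℕ}

lemma hausdorffMeasure_univ_le_of_dist_le {X Y : Type*} [MetricSpace X] [MeasurableSpace X]
    [BorelSpace X] [MetricSpace Y] [MeasurableSpace Y] [BorelSpace Y] [Nonempty X] {f : X → Y}
    {C r : ℝ≥0} (hr : 0 < r) (hf : ∀ x y, dist x y ≤ C * dist (f x) (f y) ^ (r : ℝ)) {s : ℝ}
    (hs : 0 ≤ s) : μH[s] (univ : Set X) ≤ (C : ℝ≥0∞) ^ s * μH[r * s] (range f) := by
  have hinj : Function.Injective f := fun x y hxy => by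
    have := hf x y
    rw [hxy, dist_self, Real.zero_rpow (by exact_mod_cast hr.ne'), mul_zero] at this
    exact dist_le_zero.1 this
  have hinv := Function.leftInverse_invFun hinj
  have hold : HolderOnWith C r (Function.invFun f) (range f) := by
    rintro _ ⟨x, rfl⟩ _ ⟨y, rfl⟩
    rw [hinv x, hinv y, edist_dist, edist_dist, ENNReal.ofReal_rpow_of_nonneg dist_nonneg r.coe_nonneg,
      ← ENNReal.ofReal_coe_nnreal, ← ENNReal.ofReal_mul C.coe_nonneg]
    exact ENNReal.ofReal_le_ofReal (hf x y)
  have := hold.hausdorffMeasure_image_le hr hs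
  rwa [← range_comp, hinv.comp_eq_id, range_id] at this

lemma hausdorffMeasure_cube_univ : μH[(d : ℝ)] (univ : Set (Cube d)) = 1 := by
  have h := (isometry_subtype_coe (s := Icc (0 : Fin d → ℝ) 1)).hausdorffMeasure_image
    (d := (d : ℝ)) (Or.inl d.cast_nonneg) univ
  rw [← h, image_univ, Subtype.range_coe]
  have h2 := hausdorffMeasure_pi_real (ι := Fin d)
  rw [Fintype.card_fin] at h2
  rw [h2, Real.volume_Icc_pi]
  simp

/-- The coordinatewise action of a dyadic staircase function on the cube. -/
def cubeStaircase (d : ℕ) (a : ℕ → ℕ) {Z : ℕ → ℕ} (hZ : Monotone Z) (hZ0 : Z 0 = 0)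
    (y : Cube d) : Cube d :=
  ⟨fun i => dyadicStaircase a Z ((y : Fin d → ℝ) i),
    fun i => (dyadicStaircase_mem_Icc hZ hZ0 ⟨y.2.1 i, y.2.2 i⟩).1,
    fun i => (dyadicStaircase_mem_Icc hZ hZ0 ⟨y.2.1 i, y.2.2 i⟩).2⟩

lemma dist_le_dist_cubeStaircase {a Z : ℕ → ℕ} (ha : StrictMono a) (ha0 : a 0 = 0)
    (hZ : Monotone Z) (hZ0 : Z 0 = 0) {β : ℝ} (hβ : 0 ≤ β) (hZβ : ∀ n, (Z n : ℝ) ≤ β * a n)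
    (y z : Cube d) : dist y z ≤
      2 * dist (cubeStaircase d a hZ hZ0 y) (cubeStaircase d a hZ hZ0 z) ^ (β + 1)⁻¹ := by
  have hβ1 : 0 < β + 1 := by positivity
  have aux : ∀ s t : ℝ, 0 ≤ s → t ≤ 1 → s ≤ t →
      dist s t ≤ 2 * dist (dyadicStaircase a Z s) (dyadicStaircase a Z t) ^ (β + 1)⁻¹ := by
    intro s t hs ht hst
    have h := rpow_le_dyadicStaircase_sub ha ha0 hZ hZ0 hβ hZβ hst (by linarith)
    have h0 : 0 ≤ (t - s) / 2 := by linarith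
    have h1 : ((t - s) / 2) ^ (β + 1) ≤ dist (dyadicStaircase a Z s) (dyadicStaircase a Z t) := by
      rw [dist_comm, Real.dist_eq]
      exact h.trans (le_abs_self _)
    have h2 := Real.rpow_le_rpow (by positivity) h1 (inv_nonneg.2 hβ1.le)
    rw [Real.rpow_rpow_inv h0 hβ1.ne'] at h2
    rw [dist_comm, Real.dist_eq, abs_of_nonneg (by linarith)]
    linarith
  rw [Subtype.dist_eq, dist_pi_le_iff (by positivity)]
  intro i
  have hle : dist (dyadicStaircase a Z ((y : Fin d → ℝ) i)) (dyadicStaircase a Z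
      ((z : Fin d → ℝ) i)) ≤ dist (cubeStaircase d a hZ hZ0 y) (cubeStaircase d a hZ hZ0 z) :=
    dist_le_pi_dist (cubeStaircase d a hZ hZ0 y : Fin d → ℝ)
      (cubeStaircase d a hZ hZ0 z : Fin d → ℝ) i
  have hle' := Real.rpow_le_rpow dist_nonneg hle (inv_nonneg.2 hβ1.le)
  rcases le_total ((y : Fin d → ℝ) i) ((z : Fin d → ℝ) i) with hyz | hzy
  · linarith [aux _ _ (y.2.1 i) (z.2.2 i) hyz]
  · have := aux _ _ (z.2.1 i) (y.2.2 i) hzy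
    rw [dist_comm, dist_comm (dyadicStaircase a Z _)] at this
    linarith

lemma exists_dist_cubeStaircase_gridPoint_le {a Z : ℕ → ℕ} (ha : Monotone a) (hZ : Monotone Z)
    (hZ0 : Z 0 = 0) (y : Cube d) (m : ℕ) : ∃ k,
      dist (cubeStaircase d a hZ hZ0 y) (gridPoint d (a (m + 1) + Z m) k) ≤
        ((2 : ℝ) ^ (a (m + 1) + Z (m + 1)))⁻¹ := by
  choose k hk using fun i => exists_abs_dyadicStaircase_sub_le ha hZ hZ0
    (y := (y : Fin d → ℝ) i) ⟨y.2.1 i, y.2.2 i⟩ m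
  refine ⟨k, ?_⟩
  rw [Subtype.dist_eq, dist_pi_le_iff (by positivity)]
  exact hk

lemma levelSet_zero_of_mem_typicalMeasures {μ : ProbabilityMeasure (Cube d)}
    (hμ : μ ∈ typicalMeasures d) :
    (levelSet (μ : Measure (Cube d)) 0).Nonempty ∧
      dimH (levelSet (μ : Measure (Cube d)) 0) = ENNReal.ofReal 0 := by
  refine ⟨⟨0, ?_⟩, (dimH_levelSet_le _ le_rfl).antisymm (by simp)⟩
  refine le_antisymm ?_ (by simpa using locDim_nonneg (μ : Measure (Cube d)) 0)
  choose j hj hjμ using fun n : ℕ => exists_mem_gridCharging hμ ((n + 1) * (d + 1))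
  have hjn : ∀ n : ℕ, ((n : ℝ) + 1) * (d + 1) ≤ j n := fun n => by exact_mod_cast hj n
  have hgrid : ∀ n, gridPoint d (j n) 0 = 0 := fun n => by
    ext i
    simp [gridPoint]
  refine locDim_le_of_seq _ _ 0 (fun n => 2 ^ (-(j n : ℝ) ^ 2))
    (fun n => 2 ^ (-((j n : ℝ) * (d + 1 / ((((n + 1) * (d + 1) : ℕ) : ℝ) + 1)))))
    (fun n => by positivity) ?_ (fun n => by positivity) (fun n => ?_) (fun n => ?_)
  · refine (tendsto_rpow_atBot_of_base_gt_one 2 one_lt_two).comp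
      (tendsto_neg_atTop_atBot.comp (tendsto_atTop_mono (fun n => ?_) tendsto_natCast_atTop_atTop))
    have := hjn n
    have h1 : (n : ℝ) + 1 ≤ j n := by nlinarith [(d.cast_nonneg : (0 : ℝ) ≤ d)]
    nlinarith [(n.cast_nonneg : (0 : ℝ) ≤ n)]
  · have := (hjμ n 0).le
    rwa [hgrid] at this
  · rw [Real.log_rpow two_pos, Real.log_rpow two_pos, zero_add, ← mul_assoc]
    refine mul_le_mul_of_nonneg_right ?_ (Real.log_pos one_lt_two).le
    have h1 : 1 / ((((n + 1) * (d + 1) : ℕ) : ℝ) + 1) ≤ 1 := by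
      rw [div_le_one (by positivity)]
      exact le_add_of_nonneg_left (Nat.cast_nonneg _)
    have hj0 : (0 : ℝ) ≤ j n := Nat.cast_nonneg _
    have h2 : (d : ℝ) + 1 ≤ 1 / ((n : ℝ) + 1) * j n := by
      rw [one_div, ← div_eq_inv_mul, le_div_iff₀ (by positivity)]
      linarith [hjn n]
    nlinarith

lemma exists_charged_scale {μ : ProbabilityMeasure (Cube d)} (hμ : μ ∈ typicalMeasures d)
    {h α : ℝ} (hh : 0 < h) (hα : 1 ≤ α) (hαh : α * h = d) (n z N₀ : ℕ) :
    ∃ N > N₀, ∃ e : ℝ, (∀ k, ENNReal.ofReal (2 ^ (-e)) ≤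
      (μ : Measure (Cube d)) (ball (gridPoint d (N + z) k) (2 ^ (1 - α * N)))) ∧
      e ≤ (h + 1 / ((n : ℝ) + 1)) * (α * N - 2) := by
  set η : ℝ := 1 / ((n : ℝ) + 1) with hη
  have hη0 : 0 < η := by positivity
  set C : ℝ := (h + η) * (α * z + 2) with hC
  obtain ⟨m, hm⟩ := exists_nat_ge (N₀ + z + 1 + 2 / η + 2 * C / η + α)
  have h2η : 0 < 2 / η := by positivity
  have hCη : 0 ≤ 2 * C / η := by positivity
  obtain ⟨j, hj, hjμ⟩ := exists_mem_gridCharging hμ m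
  have hmj : (m : ℝ) ≤ j := by exact_mod_cast hj
  have hN₀ : (0 : ℝ) ≤ N₀ := N₀.cast_nonneg
  have hz0 : (0 : ℝ) ≤ z := z.cast_nonneg
  have hlarge : N₀ + z + 1 ≤ j := by
    have : (N₀ : ℝ) + z + 1 ≤ j := by linarith
    exact_mod_cast this
  obtain ⟨N, rfl⟩ : ∃ N, j = N + z := ⟨j - z, by omega⟩
  refine ⟨N, by omega, _, fun k => (hjμ k).le.trans (measure_mono (ball_subset_ball
    (Real.rpow_le_rpow_of_exponent_le one_le_two ?_))), ?_⟩
  · push_cast at hmj ⊢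
    have hN : (0 : ℝ) ≤ N := N.cast_nonneg
    have : α ≤ (N : ℝ) + z := by linarith
    nlinarith
  · have h1 : 1 / ((m : ℝ) + 1) ≤ η / 2 := by
      rw [div_le_iff₀ (by positivity)]
      have : 2 / η ≤ (m : ℝ) + 1 := by linarith
      rw [div_le_iff₀ hη0] at this
      linarith
    have h2 : C ≤ ((N + z : ℕ) : ℝ) * (η / 2) := by
      have : 2 * C / η ≤ ((N + z : ℕ) : ℝ) := by linarith
      rw [div_le_iff₀ hη0] at this
      linarith
    have hj0 : (0 : ℝ) ≤ ((N + z : ℕ) : ℝ) := Nat.cast_nonneg _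
    have h3 := mul_le_mul_of_nonneg_left h1 hj0
    have h4 : ((N + z : ℕ) : ℝ) * η ≤ ((N + z : ℕ) : ℝ) * η * α :=
      le_mul_of_one_le_right (by positivity) hα
    have h5 : (h + η) * (α * N - 2) =
        ((N + z : ℕ) : ℝ) * d + ((N + z : ℕ) : ℝ) * η * α - C := by
      rw [hC, ← hαh]
      push_cast
      ring
    rw [h5]
    linarith

lemma hausdorffMeasure_locDim_le_ne_zero {μ : ProbabilityMeasure (Cube d)}
    (hμ : μ ∈ typicalMeasures d) {h : ℝ} (hh : 0 < h) (hhd : h ≤ d) :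
    μH[h] {x | locDim (μ : Measure (Cube d)) x ≤ h} ≠ 0 := by
  set α : ℝ := d / h with hα_def
  have hα : 1 ≤ α := (one_le_div hh).2 hhd
  have hαh : α * h = d := div_mul_cancel₀ _ hh.ne'
  set β : ℝ := α - 1 with hβ_def
  have hβ : 0 ≤ β := sub_nonneg.2 hα
  choose F hF e he using fun n N : ℕ => exists_charged_scale hμ hh hα hαh n ⌊β * N⌋₊ N
  obtain ⟨a, ha0, has⟩ : ∃ a : ℕ → ℕ, a 0 = 0 ∧ ∀ n, a (n + 1) = F n (a n) :=
    ⟨fun n => Nat.rec 0 F n, rfl, fun _ => rfl⟩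
  have ha : StrictMono a := strictMono_nat_of_lt_succ fun n => (hF n (a n)).trans_eq (has n).symm
  let Z : ℕ → ℕ := fun n => ⌊β * (a n : ℝ)⌋₊
  have hZ : Monotone Z := fun m n hmn => Nat.floor_mono (by
    have : a m ≤ a n := ha.monotone hmn
    gcongr)
  have hZ0 : Z 0 = 0 := by simp [Z, ha0]
  have hZβ : ∀ n, (Z n : ℝ) ≤ β * a n := fun n => Nat.floor_le (by positivity)
  have hea : ∀ n, (∀ k, ENNReal.ofReal (2 ^ (-e n (a n))) ≤ (μ : Measure (Cube d))
      (ball (gridPoint d (a (n + 1) + Z n) k) (2 ^ (1 - α * (a (n + 1) : ℝ))))) ∧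
      e n (a n) ≤ (h + 1 / ((n : ℝ) + 1)) * (α * a (n + 1) - 2) := fun n => by
    rw [has n]
    exact he n (a n)
  have hsub : range (cubeStaircase d a hZ hZ0) ⊆
      {x | locDim (μ : Measure (Cube d)) x ≤ h} := by
    rintro _ ⟨y, rfl⟩
    refine locDim_le_of_seq _ _ h (fun n => 2 ^ (2 - α * (a (n + 1) : ℝ)))
      (fun n => 2 ^ (-e n (a n))) (fun n => by positivity) ?_ (fun n => by positivity)
      (fun n => ?_) (fun n => ?_)
    · refine (tendsto_rpow_atBot_of_base_gt_one 2 one_lt_two).comp ?_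
      refine tendsto_atBot_mono (fun n => ?_)
        (tendsto_atBot_add_const_left _ 2 (tendsto_neg_atTop_atBot.comp
          (tendsto_natCast_atTop_atTop (R := ℝ))))
      have h1 : n ≤ a (n + 1) := n.le_succ.trans ha.le_apply
      have h2 : (n : ℝ) ≤ a (n + 1) := by exact_mod_cast h1
      simp only [Function.comp_apply]
      nlinarith [(n.cast_nonneg : (0 : ℝ) ≤ n)]
    · obtain ⟨k, hk⟩ := exists_dist_cubeStaircase_gridPoint_le ha.monotone hZ hZ0 y n
      refine ((hea n).1 k).trans (measure_mono (ball_subset_ball' ?_))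
      rw [dist_comm]
      refine (add_le_add_right hk _).trans ?_
      have h1 : ((2 : ℝ) ^ (a (n + 1) + Z (n + 1)))⁻¹ ≤ 2 ^ (1 - α * a (n + 1)) := by
        rw [← Real.rpow_natCast, ← Real.rpow_neg zero_le_two]
        refine Real.rpow_le_rpow_of_exponent_le one_le_two ?_
        have : β * a (n + 1) < Z (n + 1) + 1 := Nat.lt_floor_add_one _
        push_cast
        rw [hβ_def] at this
        linarith
      have h2 : (2 : ℝ) ^ (2 - α * a (n + 1)) =
          2 ^ (1 - α * a (n + 1)) + 2 ^ (1 - α * a (n + 1)) := by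
        rw [show 2 - α * a (n + 1) = (1 - α * a (n + 1)) + 1 by ring, Real.rpow_add_one two_ne_zero]
        ring
      rw [h2]
      linarith
    · rw [Real.log_rpow two_pos, Real.log_rpow two_pos, ← mul_assoc]
      refine mul_le_mul_of_nonneg_right ?_ (Real.log_pos one_lt_two).le
      linarith [(hea n).2]
  have hd0 : (0 : ℝ) < d := hh.trans_le hhd
  obtain ⟨r, hr⟩ : ∃ r : ℝ≥0, (r : ℝ) = h / d :=
    ⟨(h / d).toNNReal, Real.coe_toNNReal _ (by positivity)⟩
  have hr0 : 0 < r := by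
    rw [← NNReal.coe_pos, hr]
    positivity
  have hexp : (β + 1)⁻¹ = (r : ℝ) := by simp [hr, hβ_def, hα_def]
  have hle := hausdorffMeasure_univ_le_of_dist_le (C := 2) hr0
    (f := cubeStaircase d a hZ hZ0)
    (fun y z => hexp ▸ dist_le_dist_cubeStaircase ha ha0 hZ hZ0 hβ hZβ y z) d.cast_nonneg
  rw [hausdorffMeasure_cube_univ, hr, div_mul_cancel₀ _ hd0.ne'] at hle
  intro h0
  rw [measure_mono_null hsub h0, mul_zero] at hle
  exact absurd hle (by simp)

end Spectrum

/-- There is a dense `Gδ` set `R` of probability measures on `[0,1]^d`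
(with the weak topology) such that for every `μ ∈ R` and every `h ∈ [0,d]`, the level set
`E_μ(h)` is nonempty and has Hausdorff dimension `h`. -/
theorem typical_measures_full_spectrum (d : ℕ) (hd : 1 ≤ d) :
    ∃ R : Set (ProbabilityMeasure (Cube d)), IsGδ R ∧ Dense R ∧
      ∀ μ ∈ R, ∀ h : ℝ, 0 ≤ h → h ≤ d →
        (levelSet (μ : Measure (Cube d)) h).Nonempty ∧
          dimH (levelSet (μ : Measure (Cube d)) h) = ENNReal.ofReal h := by
  refine ⟨typicalMeasures d, isGδ_typicalMeasures d, dense_typicalMeasures d,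
    fun μ hμ h hh hhd => ?_⟩
  rcases hh.eq_or_lt with rfl | hpos
  · exact levelSet_zero_of_mem_typicalMeasures hμ
  · exact levelSet_nonempty_and_dimH _ hpos (hausdorffMeasure_locDim_le_ne_zero hμ hpos hhd)
end
end

section
/- Let μ be a Borel probability measure on [0,1]^d such that for every h ∈ [0,d] the level set E_μ(h) is nonempty and dim_H E_μ(h) = h. Then τ_μ(q) = d(q − 1) for all q ∈ [0,1]. -/
open MeasureTheory Metric Filter Set
open scoped ENNReal NNReal Topology

noncomputable section

/-- A set each of whose points lies in infinitely many members of a family of finite collections of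
sets, the `j`-th one having at most `C * 2 ^ (a * j)` members of diameter at most `K * 2 ^ (-j)`,
has Hausdorff dimension at most `s` for every `s > a`. -/
theorem dimH_le_of_frequently_mem {X : Type*} [EMetricSpace X] {ι : ℕ → Type*}
    (A : ∀ j, Finset (ι j)) (t : ∀ j, ι j → Set X) (F : Set X) {C K a s : ℝ}
    (hC : 0 ≤ C) (hK : 0 ≤ K) (hs : 0 ≤ s) (has : a < s)
    (hcard : ∀ᶠ j in atTop, ((A j).card : ℝ) ≤ C * (2 : ℝ) ^ (a * j))
    (hdiam : ∀ j k, ediam (t j k) ≤ ENNReal.ofReal (K * (1 / 2 : ℝ) ^ j))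
    (hcover : ∀ x ∈ F, ∃ᶠ j in atTop, ∃ k ∈ A j, x ∈ t j k) :
    dimH F ≤ ENNReal.ofReal s := by
  borelize X
  refine dimH_le_of_hausdorffMeasure_ne_top (d := s.toNNReal) ?_
  rw [Real.coe_toNNReal s hs]
  have htend : Tendsto (fun n : ℕ => ENNReal.ofReal (K * (1 / 2 : ℝ) ^ n)) atTop (𝓝 0) := by
    rw [← ENNReal.ofReal_zero]
    refine ENNReal.tendsto_ofReal ?_
    simpa using (tendsto_pow_atTop_nhds_zero_of_lt_one (r := (1 / 2 : ℝ))
      (by norm_num) (by norm_num)).const_mul K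
  have hle := Measure.hausdorffMeasure_le_liminf_tsum (ι := fun n : ℕ => Σ i : ℕ, A (n + i)) s F
    (l := atTop) _ htend (fun n p => t (n + p.1) p.2) ?_ ?_
  · set B : ℝ≥0∞ := ENNReal.ofReal (C * K ^ s) * (1 - ENNReal.ofReal ((2 : ℝ) ^ (a - s)))⁻¹ with hBdef
    have hr1 : (2 : ℝ) ^ (a - s) < 1 :=
      Real.rpow_lt_one_of_one_lt_of_neg (by norm_num) (by linarith)
    have hB : B ≠ ∞ := by
      refine ENNReal.mul_ne_top ENNReal.ofReal_ne_top (ENNReal.inv_ne_top.2 ?_)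
      exact (tsub_pos_of_lt (by simpa using hr1)).ne'
    refine ne_top_of_le_ne_top hB (hle.trans ?_)
    refine liminf_le_of_frequently_le' (Eventually.frequently ?_)
    obtain ⟨N, hN⟩ := eventually_atTop.1 hcard
    filter_upwards [eventually_ge_atTop N] with n hn
    rw [ENNReal.tsum_sigma (fun i (k : A (n + i)) => ediam (t (n + i) k) ^ s)]
    rw [hBdef, ← ENNReal.tsum_geometric, ← ENNReal.tsum_mul_left]
    refine ENNReal.tsum_le_tsum fun i => ?_
    have hp : (0 : ℝ) < (2 : ℝ) ^ (a - s) := by positivity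
    calc ∑' k : A (n + i), ediam (t (n + i) k) ^ s
        ≤ ∑' _ : A (n + i), ENNReal.ofReal (K * (1 / 2 : ℝ) ^ (n + i)) ^ s :=
          ENNReal.tsum_le_tsum fun k => ENNReal.rpow_le_rpow (hdiam _ _) hs
      _ = ENNReal.ofReal ((A (n + i)).card * (K * (1 / 2 : ℝ) ^ (n + i)) ^ s) := by
          rw [tsum_fintype, Finset.sum_const, Finset.card_univ, Fintype.card_coe, nsmul_eq_mul,
            ENNReal.ofReal_rpow_of_nonneg (by positivity) hs,
            ENNReal.ofReal_mul (Nat.cast_nonneg _), ENNReal.ofReal_natCast]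
      _ ≤ ENNReal.ofReal ((C * K ^ s) * ((2 : ℝ) ^ (a - s)) ^ i) := by
          refine ENNReal.ofReal_le_ofReal ?_
          calc ((A (n + i)).card : ℝ) * (K * (1 / 2 : ℝ) ^ (n + i)) ^ s
              ≤ (C * (2 : ℝ) ^ (a * (n + i : ℕ))) * (K * (1 / 2 : ℝ) ^ (n + i)) ^ s := by
                gcongr
                exact hN _ (by omega)
            _ = (C * K ^ s) * ((2 : ℝ) ^ (a - s)) ^ (n + i) := by
                rw [Real.mul_rpow hK (by positivity), ← Real.rpow_natCast ((2 : ℝ) ^ (a - s)),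
                  ← Real.rpow_mul (by norm_num), one_div, inv_pow,
                  Real.inv_rpow (by positivity), ← Real.rpow_natCast 2 (n + i),
                  ← Real.rpow_mul (by norm_num), ← Real.rpow_neg (by norm_num),
                  mul_mul_mul_comm, ← Real.rpow_add (by norm_num)]
                ring_nf
            _ ≤ (C * K ^ s) * ((2 : ℝ) ^ (a - s)) ^ i := by
                refine mul_le_mul_of_nonneg_left ?_ (by positivity)
                exact pow_le_pow_of_le_one hp.le hr1.le (by omega)
      _ = _ := by
          rw [ENNReal.ofReal_mul (by positivity), ENNReal.ofReal_pow hp.le]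
  · refine Eventually.of_forall fun n p => (hdiam _ _).trans (ENNReal.ofReal_le_ofReal ?_)
    refine mul_le_mul_of_nonneg_left ?_ hK
    exact pow_le_pow_of_le_one (by norm_num) (by norm_num) (by omega)
  · refine Eventually.of_forall fun n x hx => ?_
    obtain ⟨j, hj, k, hk, hxk⟩ := frequently_atTop.1 (hcover x hx) n
    obtain ⟨i, rfl⟩ := Nat.exists_eq_add_of_le hj
    exact mem_iUnion.2 ⟨⟨i, ⟨k, hk⟩⟩, hxk⟩

/-- A face `{x | x i = 1}` of the unit cube has Hausdorff dimension less than `d`. -/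
theorem dimH_face_lt {d : ℕ} (i : Fin d) :
    dimH {x : Cube d | (x : Fin d → ℝ) i = 1} < d := by
  obtain ⟨n, rfl⟩ : ∃ n, d = n + 1 := ⟨d - 1, by have := i.2; omega⟩
  rw [← isometry_subtype_coe.dimH_image]
  have hL : LipschitzWith 1 (fun y : Fin n → ℝ => (i.insertNth 1 y : Fin (n + 1) → ℝ)) := by
    refine LipschitzWith.of_dist_le_mul fun y z => ?_
    rw [NNReal.coe_one, one_mul, dist_pi_le_iff dist_nonneg]
    intro l
    refine Fin.succAboveCases i ?_ (fun m => ?_) l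
    · simp
    · simpa using dist_le_pi_dist y z m
  calc dimH (Subtype.val '' {x : Cube (n + 1) | (x : Fin (n + 1) → ℝ) i = 1})
      ≤ dimH (range fun y : Fin n → ℝ => (i.insertNth 1 y : Fin (n + 1) → ℝ)) := by
        refine dimH_mono ?_
        rintro _ ⟨x, hx, rfl⟩
        refine ⟨fun m => (x : Fin (n + 1) → ℝ) (i.succAbove m), ?_⟩
        simp only [mem_ofPred_eq] at hx
        funext l
        refine Fin.succAboveCases i ?_ (fun m => ?_) l <;> simp [hx]
    _ ≤ (n : ℝ≥0∞) := hL.dimH_range_le.trans_eq (Real.dimH_univ_pi_fin n)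
    _ < ((n + 1 : ℕ) : ℝ≥0∞) := by exact_mod_cast Nat.lt_succ_self n

/-- If the local dimension at `x` is less than `g`, then infinitely many dyadic balls around `x`
have mass at least that of the `g`-th power of half their radius. -/
theorem frequently_le_measureReal_ball {d : ℕ} (μ : Measure (Cube d)) [IsFiniteMeasure μ]
    (x : Cube d) {g : ℝ} (hg : 0 ≤ g) (hx : locDim μ x < (g : EReal)) :
    ∃ᶠ j : ℕ in atTop, ((1 / 2 : ℝ) ^ (j + 1)) ^ g ≤ μ.real (ball x ((1 / 2 : ℝ) ^ j)) := by
  rw [frequently_atTop]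
  intro N
  have hfreq := frequently_lt_of_liminf_lt (by isBoundedDefault) hx
  have hN : (0 : ℝ) < (1 / 2 : ℝ) ^ N := by positivity
  have hev : ∀ᶠ r : ℝ in 𝓝[>] 0, 0 < r ∧ r < (1 / 2 : ℝ) ^ N ∧ r < 1 := by
    filter_upwards [self_mem_nhdsWithin, Ioo_mem_nhdsGT hN, Ioo_mem_nhdsGT one_pos]
      with r h0 h1 h2 using ⟨h0, h1.2, h2.2⟩
  obtain ⟨r, hlt, hr0, hrN, hr1⟩ := (hfreq.and_eventually hev).exists
  have hlog : Real.log r < 0 := Real.log_neg hr0 hr1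
  have hμ0 : μ (ball x r) ≠ 0 := by
    intro h0
    rw [h0, ENNReal.log_zero, EReal.bot_div_of_neg_ne_bot (by exact_mod_cast hlog)
      (EReal.coe_ne_bot _)] at hlt
    exact not_top_lt hlt
  have hpos : 0 < (μ (ball x r)).toReal := ENNReal.toReal_pos hμ0 (measure_ne_top _ _)
  rw [ENNReal.log_pos_real hμ0 (measure_ne_top _ _), ← EReal.coe_div, EReal.coe_lt_coe_iff,
    div_lt_iff_of_neg hlog, ← Real.log_rpow hr0, Real.log_lt_log_iff (by positivity) hpos] at hlt
  obtain ⟨j, hj1, hj2⟩ := exists_nat_pow_near_of_lt_one hr0 hr1.le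
    (show (0 : ℝ) < 1 / 2 by norm_num) (by norm_num)
  refine ⟨j, ?_, ?_⟩
  · have := (pow_lt_pow_iff_right_of_lt_one₀ (show (0 : ℝ) < 1 / 2 by norm_num)
      (by norm_num)).1 (hj1.trans hrN)
    omega
  · calc ((1 / 2 : ℝ) ^ (j + 1)) ^ g ≤ r ^ g := Real.rpow_le_rpow (by positivity) hj1.le hg
      _ ≤ μ.real (ball x r) := hlt.le
      _ ≤ μ.real (ball x ((1 / 2 : ℝ) ^ j)) := measureReal_mono (ball_subset_ball hj2)

theorem measurableSet_dyadicCube (d j : ℕ) (k : Fin d → Fin (2 ^ j)) :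
    MeasurableSet (dyadicCube d j k) := by
  have : dyadicCube d j k = ⋂ i, (fun x : Cube d => (x : Fin d → ℝ) i) ⁻¹'
      Ico ((k i : ℝ) / 2 ^ j) (((k i : ℝ) + 1) / 2 ^ j) := by
    ext x
    simp [dyadicCube]
  rw [this]
  exact MeasurableSet.iInter fun i =>
    ((measurable_pi_apply i).comp measurable_subtype_coe) measurableSet_Ico

theorem pairwise_disjoint_dyadicCube (d j : ℕ) :
    Pairwise (Function.onFun Disjoint (dyadicCube d j)) := by
  intro k l hkl
  refine Set.disjoint_left.2 fun x hk hl => hkl (funext fun i => ?_)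
  have hp : (0 : ℝ) < 2 ^ j := by positivity
  obtain ⟨h1, h2⟩ := hk i
  obtain ⟨h3, h4⟩ := hl i
  have h5 : (k i : ℝ) < (l i : ℝ) + 1 := (div_lt_div_iff_of_pos_right hp).1 (h1.trans_lt h4)
  have h6 : (l i : ℝ) < (k i : ℝ) + 1 := (div_lt_div_iff_of_pos_right hp).1 (h3.trans_lt h2)
  have h7 : (k i : ℕ) < (l i : ℕ) + 1 := by exact_mod_cast h5
  have h8 : (l i : ℕ) < (k i : ℕ) + 1 := by exact_mod_cast h6
  exact Fin.ext (by omega)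

/-- Points of the half-open unit cube lie in a dyadic cube of every generation. -/
theorem exists_mem_dyadicCube {d : ℕ} (j : ℕ) (y : Cube d) (hy : ∀ i, (y : Fin d → ℝ) i < 1) :
    ∃ k, y ∈ dyadicCube d j k := by
  have hp : (0 : ℝ) < 2 ^ j := by positivity
  have h0 : ∀ i, 0 ≤ (y : Fin d → ℝ) i * 2 ^ j := fun i => mul_nonneg (y.2.1 i) hp.le
  refine ⟨fun i => ⟨⌊(y : Fin d → ℝ) i * 2 ^ j⌋₊, ?_⟩, fun i => ⟨?_, ?_⟩⟩
  · rw [Nat.floor_lt (h0 i)]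
    push_cast
    nlinarith [hy i]
  · rw [div_le_iff₀ hp]
    exact Nat.floor_le (h0 i)
  · rw [lt_div_iff₀ hp]
    exact Nat.lt_floor_add_one _

/-- At most three integers `m` of `Fin n` satisfy `X - 2 < m < X + 1`. -/
theorem card_filter_fin_near_le (n : ℕ) (X : ℝ) :
    (Finset.univ.filter fun m : Fin n => X - 2 < (m : ℝ) ∧ (m : ℝ) < X + 1).card ≤ 3 := by
  have hinj : Function.Injective fun m : Fin n => ((m : ℕ) : ℤ) := fun a b h =>
    Fin.ext (Int.ofNat_injective h)
  rw [← Finset.card_image_of_injective _ hinj]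
  calc _ ≤ (Finset.Icc (⌈X⌉ - 2) ⌈X⌉).card := by
        refine Finset.card_le_card fun z hz => ?_
        simp only [Finset.mem_image, Finset.mem_filter, Finset.mem_univ, true_and] at hz
        obtain ⟨m, ⟨h1, h2⟩, rfl⟩ := hz
        have h3 := Int.le_ceil X
        have h4 := Int.ceil_lt_add_one X
        rw [Finset.mem_Icc]
        constructor
        · have : (⌈X⌉ : ℝ) < ((m : ℕ) : ℤ) + 3 := by push_cast; linarith
          have : ⌈X⌉ < ((m : ℕ) : ℤ) + 3 := by exact_mod_cast this
          omega
        · have : (((m : ℕ) : ℤ) : ℝ) < ⌈X⌉ + 1 := by push_cast; linarith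
          have : ((m : ℕ) : ℤ) < ⌈X⌉ + 1 := by exact_mod_cast this
          omega
    _ ≤ 3 := by simp

/-- If a dyadic ball around `x` avoids the faces `{y | y i = 1}`, then one of the dyadic cubes
close to `x` carries at least the proportion `3 ^ (-d)` of its mass. -/
theorem exists_dyadicCube_of_ball {d : ℕ} (μ : Measure (Cube d)) [IsFiniteMeasure μ] (j : ℕ)
    (x : Cube d) {T : ℝ} (hT : 0 < T) (hball : T ≤ μ.real (ball x ((1 / 2 : ℝ) ^ j)))
    (hx : ∀ y ∈ ball x ((1 / 2 : ℝ) ^ j), ∀ i, (y : Fin d → ℝ) i < 1) :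
    ∃ k, T / 3 ^ d ≤ μ.real (dyadicCube d j k) ∧
      ∀ i, |(x : Fin d → ℝ) i - (k i : ℝ) / 2 ^ j| ≤ 2 * (1 / 2 : ℝ) ^ j := by
  classical
  have hp : (0 : ℝ) < 2 ^ j := by positivity
  set X : Fin d → ℝ := fun i => (x : Fin d → ℝ) i * 2 ^ j with hX
  set P : Finset (Fin d → Fin (2 ^ j)) := Fintype.piFinset fun i =>
    Finset.univ.filter fun m : Fin (2 ^ j) => X i - 2 < (m : ℝ) ∧ (m : ℝ) < X i + 1 with hP
  have hcard : P.card ≤ 3 ^ d := by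
    rw [hP, Fintype.card_piFinset]
    calc _ ≤ ∏ _i : Fin d, 3 :=
          Finset.prod_le_prod' fun i _ => card_filter_fin_near_le _ (X i)
      _ = 3 ^ d := by simp
  have hsub : ball x ((1 / 2 : ℝ) ^ j) ⊆ ⋃ k ∈ P, dyadicCube d j k := by
    intro y hy
    obtain ⟨k, hk⟩ := exists_mem_dyadicCube j y (hx y hy)
    refine mem_iUnion₂.2 ⟨k, ?_, hk⟩
    simp only [hP, Fintype.mem_piFinset, Finset.mem_filter, Finset.mem_univ, true_and]
    intro i
    have h1 : dist ((y : Fin d → ℝ) i) ((x : Fin d → ℝ) i) < (1 / 2 : ℝ) ^ j :=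
      (dist_le_pi_dist _ _ i).trans_lt hy
    rw [Real.dist_eq, one_div, inv_pow, ← one_div, lt_div_iff₀ hp, ← abs_of_pos hp, ← abs_mul,
      abs_lt] at h1
    obtain ⟨h2, h3⟩ := hk i
    rw [div_le_iff₀ hp] at h2
    rw [lt_div_iff₀ hp] at h3
    constructor <;> simp only [hX] <;> linarith [h1.1, h1.2]
  have hsum : T ≤ ∑ k ∈ P, μ.real (dyadicCube d j k) :=
    hball.trans ((measureReal_mono hsub (measure_ne_top _ _)).trans
      (measureReal_biUnion_finset_le _ _))
  have hne : P.Nonempty := by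
    rw [Finset.nonempty_iff_ne_empty]
    intro h
    rw [h, Finset.sum_empty] at hsum
    exact absurd hsum (not_le.2 hT)
  have hle : ∑ _k ∈ P, T / 3 ^ d ≤ ∑ k ∈ P, μ.real (dyadicCube d j k) := by
    refine le_trans ?_ hsum
    rw [Finset.sum_const, nsmul_eq_mul]
    have : (P.card : ℝ) ≤ 3 ^ d := by exact_mod_cast hcard
    calc (P.card : ℝ) * (T / 3 ^ d) ≤ 3 ^ d * (T / 3 ^ d) := by gcongr
      _ = T := by field_simp
  obtain ⟨k, hk, hkT⟩ := Finset.exists_le_of_sum_le hne hle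
  refine ⟨k, hkT, fun i => ?_⟩
  simp only [hP, Fintype.mem_piFinset, Finset.mem_filter, Finset.mem_univ, true_and] at hk
  obtain ⟨h1, h2⟩ := hk i
  have h3 : (x : Fin d → ℝ) i - (k i : ℝ) / 2 ^ j = (X i - k i) / 2 ^ j := by
    simp only [hX]
    field_simp
  rw [h3, abs_div, abs_of_pos hp, one_div, inv_pow, ← div_eq_mul_inv]
  gcongr
  rw [abs_le]
  constructor <;> linarith

theorem sum_measureReal_dyadicCube_le_one {d : ℕ} (μ : Measure (Cube d)) [IsProbabilityMeasure μ]
    (j : ℕ) (s : Finset (Fin d → Fin (2 ^ j))) :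
    ∑ k ∈ s, μ.real (dyadicCube d j k) ≤ 1 := by
  rw [← probReal_univ (μ := μ)]
  exact sum_measureReal_le_measureReal_univ (fun k _ => measurableSet_dyadicCube d j k)
    fun k _ l _ hkl => pairwise_disjoint_dyadicCube d j hkl

theorem dyadicSum_nonneg {d : ℕ} (μ : Measure (Cube d)) (q : ℝ) (j : ℕ) :
    0 ≤ dyadicSum μ q j :=
  Finset.sum_nonneg fun _ _ => by positivity

/-- Jensen's bound for the dyadic moment sums. -/
theorem dyadicSum_le {d : ℕ} (μ : Measure (Cube d)) [IsProbabilityMeasure μ] {q : ℝ}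
    (hq : q ∈ Icc (0 : ℝ) 1) (j : ℕ) :
    dyadicSum μ q j ≤ (2 : ℝ) ^ (((d : ℝ) * (1 - q)) * j) := by
  set N : ℝ := (2 : ℝ) ^ (d * j) with hN
  have hNpos : 0 < N := by positivity
  unfold dyadicSum
  set s := Finset.univ.filter fun k : Fin d → Fin (2 ^ j) => μ (dyadicCube d j k) ≠ 0
  have hcard : (s.card : ℝ) ≤ N := by
    have h : s.card ≤ (2 ^ j) ^ d := (Finset.card_le_univ s).trans_eq (by simp)
    calc (s.card : ℝ) ≤ ((2 ^ j) ^ d : ℕ) := by exact_mod_cast h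
      _ = N := by rw [hN, mul_comm, pow_mul]; push_cast; rfl
  have hterm : ∀ k ∈ s, (μ (dyadicCube d j k)).toReal ^ q ≤
      N ^ (-q) * ((1 - q) + q * (N * μ.real (dyadicCube d j k))) := by
    intro k _
    have h := Real.geom_mean_le_arith_mean2_weighted (sub_nonneg.2 hq.2) hq.1 zero_le_one
      (mul_nonneg hNpos.le (measureReal_nonneg (μ := μ) (s := dyadicCube d j k))) (by ring)
    rw [Real.one_rpow, one_mul, mul_one, Real.mul_rpow hNpos.le measureReal_nonneg] at h
    calc (μ (dyadicCube d j k)).toReal ^ q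
        = N ^ (-q) * (N ^ q * μ.real (dyadicCube d j k) ^ q) := by
          rw [← mul_assoc, ← Real.rpow_add hNpos, neg_add_cancel, Real.rpow_zero, one_mul]
          rfl
      _ ≤ _ := by gcongr
  calc _ ≤ ∑ k ∈ s, N ^ (-q) * ((1 - q) + q * (N * μ.real (dyadicCube d j k))) :=
        Finset.sum_le_sum hterm
    _ = N ^ (-q) * (s.card * (1 - q) + q * (N * ∑ k ∈ s, μ.real (dyadicCube d j k))) := by
        rw [← Finset.mul_sum, Finset.sum_add_distrib, Finset.sum_const, nsmul_eq_mul,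
          ← Finset.mul_sum, ← Finset.mul_sum]
    _ ≤ N ^ (-q) * (N * (1 - q) + q * (N * 1)) := by
        have := sum_measureReal_dyadicCube_le_one μ j s
        have h1 := hq.1
        have h2 := sub_nonneg.2 hq.2
        gcongr
    _ = N ^ (1 - q) := by
        rw [show N * (1 - q) + q * (N * 1) = N by ring, sub_eq_neg_add,
          Real.rpow_add hNpos, Real.rpow_one]
    _ = _ := by
        rw [hN, ← Real.rpow_natCast, ← Real.rpow_mul (by norm_num)]
        push_cast
        ring_nf

theorem le_lqSpectrum {d : ℕ} (μ : Measure (Cube d)) [IsProbabilityMeasure μ] {q : ℝ}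
    (hq : q ∈ Icc (0 : ℝ) 1) : (((d : ℝ) * (q - 1) : ℝ) : EReal) ≤ lqSpectrum μ q := by
  refine le_liminf_of_le (by isBoundedDefault) ?_
  filter_upwards [eventually_gt_atTop 0] with j hj
  rw [EReal.coe_le_coe_iff]
  have hj' : (0 : ℝ) < j := by exact_mod_cast hj
  have hlog : Real.logb 2 (dyadicSum μ q j) ≤ ((d : ℝ) * (1 - q)) * j := by
    rcases (dyadicSum_nonneg μ q j).eq_or_lt with h0 | h0
    · rw [← h0, Real.logb_zero]
      have := sub_nonneg.2 hq.2
      positivity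
    · rw [Real.logb_le_iff_le_rpow (by norm_num) h0]
      exact dyadicSum_le μ hq j
  calc (d : ℝ) * (q - 1) = -(1 / (j : ℝ)) * (((d : ℝ) * (1 - q)) * j) := by
        field_simp
        ring
    _ ≤ _ := mul_le_mul_of_nonpos_left hlog (by simp)

/-- The number of dyadic cubes of mass at least `T`, weighted by `T ^ q`, is bounded by the
dyadic moment sum. -/
theorem card_mul_rpow_le_dyadicSum {d : ℕ} (μ : Measure (Cube d)) {q T : ℝ} (hq : 0 ≤ q)
    (hT : 0 < T) (j : ℕ) :
    ((Finset.univ.filter fun k : Fin d → Fin (2 ^ j) => T ≤ μ.real (dyadicCube d j k)).card : ℝ)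
      * T ^ q ≤ dyadicSum μ q j := by
  rw [← nsmul_eq_mul, ← Finset.sum_const]
  refine (Finset.sum_le_sum (g := fun k => (μ (dyadicCube d j k)).toReal ^ q) ?_).trans
    (Finset.sum_le_sum_of_subset_of_nonneg ?_ fun _ _ _ => by positivity)
  · intro k hk
    exact Real.rpow_le_rpow hT.le (Finset.mem_filter.1 hk).2 hq
  · intro k hk
    refine Finset.mem_filter.2 ⟨Finset.mem_univ _, fun h0 => ?_⟩
    have := (Finset.mem_filter.1 hk).2
    rw [measureReal_def, h0, ENNReal.toReal_zero] at this
    exact absurd this (not_le.2 hT)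

/-- A measure whose points of local dimension at most `d` form a set of full Hausdorff dimension
has an `L^q`-spectrum at most `d * (q - 1)` on `[0,1]`. -/
theorem lqSpectrum_le {d : ℕ} (hd : 1 ≤ d) (μ : Measure (Cube d)) [IsProbabilityMeasure μ]
    (hdim : dimH {x | locDim μ x ≤ ((d : ℝ) : EReal)} = d) {q : ℝ} (hq : q ∈ Icc (0 : ℝ) 1) :
    lqSpectrum μ q ≤ (((d : ℝ) * (q - 1) : ℝ) : EReal) := by
  by_contra! hlt
  obtain ⟨c, hc, hc'⟩ := EReal.lt_iff_exists_real_btwn.1 hlt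
  rw [EReal.coe_lt_coe_iff] at hc
  set η : ℝ := c - d * (q - 1) with hη
  have hη0 : 0 < η := sub_pos.2 hc
  set g : ℝ := d + η / 2 with hg
  have hd0 : (0 : ℝ) < d := by exact_mod_cast hd
  have hg0 : 0 < g := by positivity
  set s : ℝ := max (d - η / 4) 0
  have hsd : s < d := max_lt (by linarith) hd0
  set T : ℕ → ℝ := fun j => ((1 / 2 : ℝ) ^ (j + 1)) ^ g / 3 ^ d with hTdef
  have hT : ∀ j, 0 < T j := fun j => by positivity
  set E : Set (Cube d) := {x | locDim μ x ≤ ((d : ℝ) : EReal)}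
  set F : Set (Cube d) := {x ∈ E | ∀ i, (x : Fin d → ℝ) i < 1}
  have hF : dimH F ≤ ENNReal.ofReal s := by
    refine dimH_le_of_frequently_mem
      (A := fun j => Finset.univ.filter fun k : Fin d → Fin (2 ^ j) =>
        T j ≤ μ.real (dyadicCube d j k))
      (t := fun j k => {x : Cube d | ∀ i, |(x : Fin d → ℝ) i - (k i : ℝ) / 2 ^ j| ≤ 2 * (1 / 2 : ℝ) ^ j})
      (C := ((2 : ℝ) ^ g * 3 ^ d) ^ q) (K := 4) (a := g * q - c) F
      (by positivity) (by norm_num) (le_max_right _ _) ?_ ?_ ?_ ?_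
    · refine lt_of_lt_of_le ?_ (le_max_left _ _)
      have : η / 2 * q ≤ η / 2 := mul_le_of_le_one_right (by linarith) hq.2
      have : g * q - c = d + η / 2 * q - η := by rw [hη, hg]; ring
      linarith
    · filter_upwards [eventually_lt_of_lt_liminf hc' (by isBoundedDefault),
        eventually_gt_atTop 0] with j hj hj0
      rw [EReal.coe_lt_coe_iff] at hj
      have hj0' : (0 : ℝ) < j := by exact_mod_cast hj0
      have hS : dyadicSum μ q j ≤ (2 : ℝ) ^ (-(c * j)) := by
        rcases (dyadicSum_nonneg μ q j).eq_or_lt with h0 | h0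
        · rw [← h0]
          positivity
        · rw [← Real.logb_le_iff_le_rpow (by norm_num) h0]
          have : c * j < -(1 / (j : ℝ)) * Real.logb 2 (dyadicSum μ q j) * j := by gcongr
          have h2 : -(1 / (j : ℝ)) * Real.logb 2 (dyadicSum μ q j) * j
            = - Real.logb 2 (dyadicSum μ q j) := by field_simp
          linarith
      have hle := (card_mul_rpow_le_dyadicSum μ hq.1 (hT j) j).trans hS
      rw [← le_div_iff₀ (Real.rpow_pos_of_pos (hT j) q)] at hle
      refine hle.trans_eq ?_
      have hTj : T j = ((2 : ℝ) ^ g * 3 ^ d)⁻¹ * (2 : ℝ) ^ (-(g * j)) := by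
        simp only [hTdef]
        rw [one_div, inv_pow, Real.inv_rpow (by positivity), ← Real.rpow_natCast 2 (j + 1),
          ← Real.rpow_mul (by norm_num), Real.rpow_neg (by norm_num)]
        push_cast
        rw [show ((j : ℝ) + 1) * g = g + g * j by ring, Real.rpow_add (by norm_num)]
        field_simp
      rw [hTj, Real.mul_rpow (by positivity) (by positivity), Real.inv_rpow (by positivity),
        ← Real.rpow_mul (by norm_num), div_eq_mul_inv, mul_inv, inv_inv,
        ← Real.rpow_neg (by norm_num), mul_left_comm, ← Real.rpow_add (by norm_num)]
      ring_nf
    · intro j k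
      refine ediam_le fun x hx y hy => ?_
      rw [edist_dist]
      refine ENNReal.ofReal_le_ofReal ?_
      rw [Subtype.dist_eq, dist_pi_le_iff (by positivity)]
      intro i
      calc _ ≤ dist ((x : Fin d → ℝ) i) ((k i : ℝ) / 2 ^ j)
            + dist ((y : Fin d → ℝ) i) ((k i : ℝ) / 2 ^ j) := dist_triangle_right _ _ _
        _ ≤ 2 * (1 / 2 : ℝ) ^ j + 2 * (1 / 2 : ℝ) ^ j := add_le_add (hx i) (hy i)
        _ = 4 * (1 / 2 : ℝ) ^ j := by ring
    · rintro x ⟨hxE, hx1⟩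
      have hopen : IsOpen {y : Cube d | ∀ i, (y : Fin d → ℝ) i < 1} := by
        rw [ofPred_forall]
        exact isOpen_iInter_of_finite fun i =>
          isOpen_lt ((continuous_apply i).comp continuous_subtype_val) continuous_const
      obtain ⟨ε, hε, hεsub⟩ := Metric.isOpen_iff.1 hopen x hx1
      have hsmall : ∀ᶠ j : ℕ in atTop, (1 / 2 : ℝ) ^ j < ε :=
        (tendsto_pow_atTop_nhds_zero_of_lt_one (by norm_num) (by norm_num)).eventually_lt_const hε
      have hloc : locDim μ x < (g : EReal) :=
        lt_of_le_of_lt hxE (EReal.coe_lt_coe_iff.2 (by rw [hg]; linarith))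
      refine ((frequently_le_measureReal_ball μ x hg0.le hloc).and_eventually hsmall).mono ?_
      rintro j ⟨hj, hjε⟩
      obtain ⟨k, hk, hkx⟩ := exists_dyadicCube_of_ball μ j x (by positivity) hj
        fun y hy => hεsub (ball_subset_ball hjε.le hy)
      exact ⟨k, Finset.mem_filter.2 ⟨Finset.mem_univ _, hk⟩, hkx⟩
  have hcov : E ⊆ F ∪ ⋃ i, {x : Cube d | (x : Fin d → ℝ) i = 1} := by
    intro x hx
    by_cases h : ∀ i, (x : Fin d → ℝ) i < 1
    · exact Or.inl ⟨hx, h⟩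
    · push Not at h
      obtain ⟨i, hi⟩ := h
      exact Or.inr (mem_iUnion.2 ⟨i, le_antisymm (x.2.2 i) hi⟩)
  have hlt' : dimH E < d := by
    refine (dimH_mono hcov).trans_lt ?_
    rw [dimH_union, dimH_iUnion]
    refine max_lt (hF.trans_lt ?_) ?_
    · rw [← ENNReal.ofReal_natCast]
      exact (ENNReal.ofReal_lt_ofReal_iff hd0).2 hsd
    · have : Nonempty (Fin d) := ⟨⟨0, hd⟩⟩
      obtain ⟨i, hi⟩ := exists_eq_ciSup_of_finite
        (f := fun i : Fin d => dimH {x : Cube d | (x : Fin d → ℝ) i = 1})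
      rw [← hi]
      exact dimH_face_lt i
  exact hlt'.ne hdim

/-- If a Borel probability measure `μ` on `[0,1]^d` satisfies
`E_μ(h) ≠ ∅` and `dim_H E_μ(h) = h` for every `h ∈ [0,d]`, then `τ_μ(q) = d(q-1)`
for all `q ∈ [0,1]`. -/
theorem lq_spectrum_of_linear_spectrum (d : ℕ) (hd : 1 ≤ d) (μ : Measure (Cube d))
    [IsProbabilityMeasure μ]
    (H : ∀ h ∈ Set.Icc (0 : ℝ) (d : ℝ),
      (levelSet μ h).Nonempty ∧ dimH (levelSet μ h) = ENNReal.ofReal h) :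
    ∀ q ∈ Set.Icc (0 : ℝ) 1, lqSpectrum μ q = (((d : ℝ) * (q - 1) : ℝ) : EReal) := by
  intro q hq
  refine le_antisymm (lqSpectrum_le hd μ ?_ hq) (le_lqSpectrum μ hq)
  have hdim := (H d ⟨by positivity, le_rfl⟩).2
  rw [ENNReal.ofReal_natCast] at hdim
  refine le_antisymm ?_ (hdim.symm.trans_le (dimH_mono fun x hx => le_of_eq hx))
  rw [← isometry_subtype_coe.dimH_image, ← Real.dimH_univ_pi_fin d]
  exact dimH_mono (subset_univ _)
end
end

section
/- For every θ > 1 there exist a strictly increasing sequence (j_p)_{p≥1} of positive integers, a Borel probability measure m on [0,1]^d whose support is contained in A_θ, a continuous increasing function ψ : [0,∞) → [0,∞) with ψ(0) = 0, and η > 0, such that m(B) ≤ |B|^{d/θ − ψ(|B|)} for every Borel set B ⊆ [0,1]^d with diameter |B| < η. Consequently every Borel set E with m(E) > 0 satisfies dim_H E ≥ d/θ. -/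
open MeasureTheory Metric Filter Set
open scoped ENNReal NNReal Topology

noncomputable section

/-- The union over `k ∈ Z_j` of the closed balls of radius `2^{-θ j}` centered at the
dyadic centers `(k + e) 2^{-j}`, in the supremum metric of `ℝ^d`. -/
def dyadicBallUnion (d : ℕ) (θ : ℝ) (j : ℕ) : Set (Fin d → ℝ) :=
  ⋃ k : Fin d → Fin (2 ^ j),
    Metric.closedBall (fun i => ((k i : ℝ) + 1 / 2) / 2 ^ j) ((2 : ℝ) ^ (-(θ * (j : ℝ))))

/-- The set `A_θ` of points of `[0,1]^d` belonging to infinitely many of the sets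
`∪_{k ∈ Z_{j_p}} B̄((k+e)2^{-j_p}, 2^{-θ j_p})`. -/
def atheta (d : ℕ) (θ : ℝ) (j : ℕ → ℕ) : Set (Fin d → ℝ) :=
  Set.Icc 0 1 ∩ {x | ∀ P : ℕ, ∃ p, P ≤ p ∧ x ∈ dyadicBallUnion d θ (j p)}

/-- The natural number whose binary expansion is given by the first `n` digits of `x`. -/
def prefixVal (x : ℕ → Fin 2) : ℕ → ℕ
  | 0 => 0
  | n + 1 => 2 * prefixVal x n + (x n : ℕ)

lemma prefixVal_lt (x : ℕ → Fin 2) (n : ℕ) : prefixVal x n < 2 ^ n := by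
  induction n with
  | zero => simp [prefixVal]
  | succ n ih => simp only [prefixVal, pow_succ]; omega

lemma eq_of_prefixVal_eq {x y : ℕ → Fin 2} {n : ℕ} (h : prefixVal x n = prefixVal y n) :
    ∀ i < n, x i = y i := by
  induction n with
  | zero => simp
  | succ n ih =>
    simp only [prefixVal] at h
    intro i hi
    rcases Nat.lt_succ_iff_lt_or_eq.1 hi with hi | rfl
    · exact ih (by omega) i hi
    · exact Fin.ext (by omega)

lemma sum_ofDigitsTerm_eq (x : ℕ → Fin 2) (n : ℕ) :
    ∑ i ∈ Finset.range n, Real.ofDigitsTerm x i = prefixVal x n / 2 ^ n := by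
  induction n with
  | zero => simp [prefixVal]
  | succ n ih =>
    rw [Finset.sum_range_succ, ih, prefixVal, Real.ofDigitsTerm]
    push_cast
    field_simp
    ring

lemma prefixVal_div_le_ofDigits (x : ℕ → Fin 2) (n : ℕ) :
    prefixVal x n / 2 ^ n ≤ Real.ofDigits x := by
  rw [Real.ofDigits_eq_sum_add_ofDigits x n, sum_ofDigitsTerm_eq]
  have := Real.ofDigits_nonneg fun i ↦ x (i + n)
  have : 0 ≤ (((2 : ℕ) : ℝ) ^ n)⁻¹ * Real.ofDigits fun i ↦ x (i + n) := by positivity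
  linarith

lemma ofDigits_le_prefixVal_div (x : ℕ → Fin 2) (n : ℕ) :
    Real.ofDigits x ≤ (prefixVal x n + 1) / 2 ^ n := by
  rw [Real.ofDigits_eq_sum_add_ofDigits x n, sum_ofDigitsTerm_eq, add_div, one_div]
  have := Real.ofDigits_le_one fun i ↦ x (i + n)
  have : (((2 : ℕ) : ℝ) ^ n)⁻¹ * (Real.ofDigits fun i ↦ x (i + n)) ≤ (2 ^ n)⁻¹ := by
    push_cast
    exact mul_le_of_le_one_right (by positivity) this
  linarith

/-- Position `i` is free if it lies in none of the blocks `[j p, ⌈θ j p⌉)`. -/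
def IsFree (θ : ℝ) (j : ℕ → ℕ) (i : ℕ) : Prop := ∀ p, j p ≤ i → ⌈θ * j p⌉₊ ≤ i

open Classical in
/-- Overwrite a digit sequence on each block `[j p, ⌈θ j p⌉)` by the pattern `1000…`. -/
def forceDigits (θ : ℝ) (j : ℕ → ℕ) (ω : ℕ → Fin 2) (i : ℕ) : Fin 2 :=
  if IsFree θ j i then ω i else if i ∈ range j then 1 else 0

lemma continuous_forceDigits (θ : ℝ) (j : ℕ → ℕ) : Continuous (forceDigits θ j) := by
  refine continuous_pi fun i ↦ ?_
  unfold forceDigits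
  split_ifs <;> fun_prop

section Blocks

variable {θ : ℝ} {j : ℕ → ℕ}

lemma lt_ceil_mul (hθ : 1 < θ) {n : ℕ} (hn : 1 ≤ n) : n < ⌈θ * n⌉₊ := by
  rw [Nat.lt_ceil]
  have : (1 : ℝ) ≤ n := by exact_mod_cast hn
  nlinarith

lemma one_le_of_ceil_sq_le (hθ : 1 < θ) (h0 : 1 ≤ j 0) (hj : ∀ p, ⌈θ * j p⌉₊ ^ 2 ≤ j (p + 1))
    (p : ℕ) : 1 ≤ j p := by
  induction p with
  | zero => exact h0
  | succ p ih =>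
    have := lt_ceil_mul hθ ih
    nlinarith [hj p]

lemma ceil_le_succ (hj : ∀ p, ⌈θ * j p⌉₊ ^ 2 ≤ j (p + 1)) (p : ℕ) : ⌈θ * j p⌉₊ ≤ j (p + 1) :=
  (Nat.le_self_pow two_ne_zero _).trans (hj p)

lemma strictMono_of_ceil_sq_le (hθ : 1 < θ) (h0 : 1 ≤ j 0)
    (hj : ∀ p, ⌈θ * j p⌉₊ ^ 2 ≤ j (p + 1)) : StrictMono j :=
  strictMono_nat_of_lt_succ fun p ↦
    (lt_ceil_mul hθ (one_le_of_ceil_sq_le hθ h0 hj p)).trans_le (ceil_le_succ hj p)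

lemma isFree_of_le_of_lt (hmono : StrictMono j) {p i : ℕ} (h₁ : ⌈θ * j p⌉₊ ≤ i)
    (h₂ : i < j (p + 1)) (hθ : 1 < θ) : IsFree θ j i := by
  intro q hq
  have hqp : q ≤ p := Nat.lt_succ_iff.1 (hmono.lt_iff_lt.1 (hq.trans_lt h₂))
  refine le_trans (Nat.ceil_mono ?_) h₁
  have : (j q : ℝ) ≤ j p := by exact_mod_cast hmono.monotone hqp
  gcongr

lemma isFree_of_lt (hmono : StrictMono j) {i : ℕ} (h : i < j 0) : IsFree θ j i :=
  fun q hq ↦ absurd (hq.trans_lt h) (not_lt.2 (hmono.monotone q.zero_le))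

open Classical in
/-- The number of free positions among the first `n` ones. -/
def freeCount (θ : ℝ) (j : ℕ → ℕ) (n : ℕ) : ℕ := ((Finset.range n).filter (IsFree θ j)).card

lemma le_freeCount_of_forall {n s t u : ℕ} (hst : t ≤ u) (hu : u ≤ n)
    (h₁ : ∀ i, s ≤ i → i < t → IsFree θ j i) (h₂ : ∀ i, u ≤ i → i < n → IsFree θ j i) :
    (t - s) + (n - u) ≤ freeCount θ j n := by
  classical
  rw [← Nat.card_Ico, ← Nat.card_Ico, ← Finset.card_union_of_disjoint]
  · refine Finset.card_le_card fun i hi ↦ ?_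
    simp only [Finset.mem_union, Finset.mem_Ico] at hi
    rw [Finset.mem_filter, Finset.mem_range]
    rcases hi with hi | hi
    · exact ⟨by omega, h₁ i hi.1 hi.2⟩
    · exact ⟨by omega, h₂ i hi.1 hi.2⟩
  · refine Finset.disjoint_left.2 fun i hi hi' ↦ ?_
    simp only [Finset.mem_Ico] at hi hi'
    omega

lemma le_freeCount (hθ : 1 < θ) (h0 : 1 ≤ j 0) (hj : ∀ p, ⌈θ * j p⌉₊ ^ 2 ≤ j (p + 1)) (n : ℕ) :
    n / θ - 1 - √n ≤ freeCount θ j n := by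
  have hmono := strictMono_of_ceil_sq_le hθ h0 hj
  have hθ0 : 0 < θ := by linarith
  have hs0 := Real.sqrt_nonneg n
  rcases lt_or_ge n (j 0) with hn | hn
  · have h : (n - 0) + (n - n) ≤ freeCount θ j n :=
      le_freeCount_of_forall le_rfl le_rfl (fun i _ hi ↦ isFree_of_lt hmono (hi.trans hn))
        (fun i h h' ↦ by omega)
    have h : (n : ℝ) ≤ freeCount θ j n := by exact_mod_cast (by omega : n ≤ freeCount θ j n)
    have : n / θ ≤ n := div_le_self (by positivity) hθ.le
    linarith
  obtain ⟨p, hp, hp'⟩ : ∃ p, j p ≤ n ∧ n < j (p + 1) := by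
    have hex : ∃ q, n < j q := ⟨n + 1, hmono.le_apply⟩
    classical
    obtain ⟨p, hp⟩ : ∃ p, Nat.find hex = p + 1 := Nat.exists_eq_succ_of_ne_zero fun h ↦ by
      have := Nat.find_spec hex
      rw [h] at this
      omega
    refine ⟨p, ?_, hp ▸ Nat.find_spec hex⟩
    exact not_lt.1 (Nat.find_min hex (by omega))
  obtain ⟨s, hs, hsj, hfree⟩ :
      ∃ s, s ^ 2 ≤ j p ∧ s ≤ j p ∧ ∀ i, s ≤ i → i < j p → IsFree θ j i := by
    rcases p with _ | p
    · exact ⟨0, by simp, by simp, fun i _ hi ↦ isFree_of_lt hmono hi⟩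
    · exact ⟨⌈θ * j p⌉₊, hj p, ceil_le_succ hj p, fun i h h' ↦ isFree_of_le_of_lt hmono h h' hθ⟩
  have hsn : (s : ℝ) ≤ √n := by
    refine Real.le_sqrt_of_sq_le ?_
    exact_mod_cast hs.trans hp
  have hceil : (⌈θ * j p⌉₊ : ℝ) < θ * j p + 1 := Nat.ceil_lt_add_one (by positivity)
  have hceil' : θ * j p ≤ ⌈θ * j p⌉₊ := Nat.le_ceil _
  have hjp := lt_ceil_mul hθ (one_le_of_ceil_sq_le hθ h0 hj p)
  rcases le_or_gt n ⌈θ * j p⌉₊ with hn' | hn'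
  · have h : (j p - s) + (n - n) ≤ freeCount θ j n :=
      le_freeCount_of_forall hp le_rfl hfree (fun i h h' ↦ by omega)
    have h : (j p : ℝ) ≤ freeCount θ j n + s := by
      exact_mod_cast (by omega : j p ≤ freeCount θ j n + s)
    have hn'' : (n : ℝ) ≤ ⌈θ * j p⌉₊ := by exact_mod_cast hn'
    have : n / θ ≤ j p + 1 := by
      rw [div_le_iff₀ hθ0]
      nlinarith
    linarith
  · have h : (j p - s) + (n - ⌈θ * j p⌉₊) ≤ freeCount θ j n :=
      le_freeCount_of_forall hjp.le hn'.le hfree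
        (fun i h h' ↦ isFree_of_le_of_lt hmono h (h'.trans hp') hθ)
    have h : (j p : ℝ) + n ≤ freeCount θ j n + s + ⌈θ * j p⌉₊ := by
      exact_mod_cast (by omega : j p + n ≤ freeCount θ j n + s + ⌈θ * j p⌉₊)
    have hn'' : (⌈θ * j p⌉₊ : ℝ) ≤ n := by exact_mod_cast hn'.le
    have : n / θ ≤ n - (θ - 1) * j p := by
      rw [div_le_iff₀ hθ0]
      nlinarith [mul_nonneg (sub_nonneg.2 hθ.le) (sub_nonneg.2 (hceil'.trans hn''))]
    linarith

/-- The numbers with forced digits are within `2 ^ (-θ j p)` of a dyadic center of level `j p`. -/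
lemma abs_ofDigits_forceDigits_sub_le (hθ : 1 < θ) (h0 : 1 ≤ j 0)
    (hj : ∀ p, ⌈θ * j p⌉₊ ^ 2 ≤ j (p + 1)) (ω : ℕ → Fin 2) (p : ℕ) :
    |Real.ofDigits (forceDigits θ j ω) - (prefixVal (forceDigits θ j ω) (j p) + 1 / 2) / 2 ^ j p| ≤
      2 ^ (-(θ * j p)) := by
  set x := forceDigits θ j ω with hx
  have hmono := strictMono_of_ceil_sq_le hθ h0 hj
  have hjp := lt_ceil_mul hθ (one_le_of_ceil_sq_le hθ h0 hj p)
  have hone : x (j p) = 1 := by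
    have : ¬ IsFree θ j (j p) := fun h ↦ absurd (h p le_rfl) (not_le.2 hjp)
    simp [hx, forceDigits, this]
  have hzero : ∀ i, j p < i → i < ⌈θ * j p⌉₊ → x i = 0 := by
    intro i hi hi'
    have h₁ : ¬ IsFree θ j i := fun h ↦ absurd (h p hi.le) (not_le.2 hi')
    have h₂ : i ∉ range j := by
      rintro ⟨q, rfl⟩
      have hpq := hmono.lt_iff_lt.1 hi
      have := hmono.monotone (Nat.succ_le_of_lt hpq)
      have := ceil_le_succ hj p
      simp only [Nat.succ_eq_add_one] at *
      omega
    simp only [hx, forceDigits, if_neg h₁, if_neg h₂]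
  have key : ∀ i, j p + 1 ≤ i → i ≤ ⌈θ * j p⌉₊ →
      (prefixVal x i : ℝ) / 2 ^ i = (prefixVal x (j p) + 1 / 2) / 2 ^ j p := by
    intro i hi
    induction i, hi using Nat.le_induction with
    | base =>
      intro _
      rw [prefixVal, hone, pow_succ]
      push_cast
      field_simp
      simp
    | succ i hi ih =>
      intro hi'
      rw [← ih (by omega), prefixVal, hzero i (by omega) (by omega), pow_succ]
      push_cast
      field_simp
      simp
  rw [← key _ hjp le_rfl, abs_of_nonneg (sub_nonneg.2 (prefixVal_div_le_ofDigits _ _))]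
  calc _ ≤ ((2 : ℝ) ^ ⌈θ * j p⌉₊)⁻¹ := by
        have := ofDigits_le_prefixVal_div x ⌈θ * j p⌉₊
        rw [add_div, one_div] at this
        linarith
    _ = (2 : ℝ) ^ (-(⌈θ * j p⌉₊ : ℝ)) := by
        rw [Real.rpow_neg zero_le_two, Real.rpow_natCast]
    _ ≤ _ := by
        gcongr
        · exact one_le_two
        · exact Nat.le_ceil _

end Blocks

/-- The law of a sequence of independent fair binary digits. -/
def coinMeasure : Measure (ℕ → Fin 2) :=
  Measure.infinitePi fun _ ↦ (PMF.uniformOfFintype (Fin 2)).toMeasure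

instance : IsProbabilityMeasure coinMeasure := by unfold coinMeasure; infer_instance

/-- The law of the random number whose binary digits are fair and independent at the free
positions, and forced elsewhere. -/
def blockMeasure (θ : ℝ) (j : ℕ → ℕ) : Measure ℝ :=
  coinMeasure.map fun ω ↦ Real.ofDigits (forceDigits θ j ω)

lemma measurable_ofDigits_forceDigits (θ : ℝ) (j : ℕ → ℕ) :
    Measurable fun ω ↦ Real.ofDigits (forceDigits θ j ω) :=
  (Real.continuous_ofDigits.comp (continuous_forceDigits θ j)).measurable

instance (θ : ℝ) (j : ℕ → ℕ) : IsProbabilityMeasure (blockMeasure θ j) :=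
  Measure.isProbabilityMeasure_map (measurable_ofDigits_forceDigits θ j).aemeasurable

lemma coinMeasure_prefixVal_le (θ : ℝ) (j : ℕ → ℕ) (n k : ℕ) :
    coinMeasure {ω | prefixVal (forceDigits θ j ω) n = k} ≤ 2⁻¹ ^ freeCount θ j n := by
  classical
  rcases eq_empty_or_nonempty {ω | prefixVal (forceDigits θ j ω) n = k} with h | ⟨c, hc⟩
  · simp [h]
  calc _ ≤ coinMeasure (Set.pi ↑((Finset.range n).filter (IsFree θ j)) fun i ↦ {c i}) := by
        refine measure_mono fun ω hω i hi ↦ ?_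
        rw [Finset.mem_coe, Finset.mem_filter, Finset.mem_range] at hi
        have := eq_of_prefixVal_eq (Eq.trans hω hc.symm) i hi.1
        simpa [forceDigits, hi.2] using this
    _ = _ := by
        rw [coinMeasure, Measure.infinitePi_pi _ fun i _ ↦ measurableSet_singleton _]
        have (a : Fin 2) : (PMF.uniformOfFintype (Fin 2)).toMeasure {a} = 2⁻¹ := by
          rw [PMF.toMeasure_apply_singleton _ _ (measurableSet_singleton _)]
          simp
        simp [this, freeCount]

lemma blockMeasure_closedBall_le (θ : ℝ) (j : ℕ → ℕ) (n : ℕ) (x : ℝ) :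
    blockMeasure θ j (closedBall x (2 ^ n)⁻¹) ≤ 4 * 2⁻¹ ^ freeCount θ j n := by
  rw [blockMeasure, Measure.map_apply (measurable_ofDigits_forceDigits θ j)
    isClosed_closedBall.measurableSet]
  set k := ⌈2 ^ n * x - 2⌉₊
  calc _ ≤ coinMeasure (⋃ l ∈ Finset.Icc k (k + 3),
          {ω | prefixVal (forceDigits θ j ω) n = l}) := by
        refine measure_mono fun ω hω ↦ ?_
        rw [mem_preimage, mem_closedBall, Real.dist_eq, abs_le] at hω
        have h₁ := prefixVal_div_le_ofDigits (forceDigits θ j ω) n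
        have h₂ := ofDigits_le_prefixVal_div (forceDigits θ j ω) n
        have hpos : (0 : ℝ) < 2 ^ n := by positivity
        rw [div_le_iff₀ hpos] at h₁
        rw [le_div_iff₀ hpos] at h₂
        have h₃ := mul_le_mul_of_nonneg_right hω.1 hpos.le
        have h₄ := mul_le_mul_of_nonneg_right hω.2 hpos.le
        rw [inv_mul_cancel₀ hpos.ne'] at h₄
        rw [neg_mul, inv_mul_cancel₀ hpos.ne'] at h₃
        have hk : 2 ^ n * x - 2 ≤ k := Nat.le_ceil _
        simp only [mem_iUnion, Finset.mem_Icc, mem_ofPred_eq, exists_prop, exists_eq_right']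
        constructor
        · refine Nat.ceil_le.2 ?_
          nlinarith
        · have : (prefixVal (forceDigits θ j ω) n : ℝ) ≤ (k + 3 : ℕ) := by
            push_cast
            nlinarith
          exact_mod_cast this
    _ ≤ ∑ l ∈ Finset.Icc k (k + 3), coinMeasure {ω | prefixVal (forceDigits θ j ω) n = l} :=
        measure_biUnion_finset_le _ _
    _ ≤ ∑ l ∈ Finset.Icc k (k + 3), 2⁻¹ ^ freeCount θ j n :=
        Finset.sum_le_sum fun l _ ↦ coinMeasure_prefixVal_le θ j n l
    _ = _ := by
        rw [Finset.sum_const, Nat.card_Icc, nsmul_eq_mul]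
        congr 1
        have : k + 3 + 1 - k = 4 := by omega
        rw [this]
        norm_num

/-- The gauge `r ↦ C / √(log₂ (1 + 1 / r))`, which vanishes at `0`. -/
def logGauge (C r : ℝ) : ℝ := C / √(Real.logb 2 (1 + 1 / r))

lemma logGauge_zero (C : ℝ) : logGauge C 0 = 0 := by simp [logGauge]

lemma logb_one_add_one_div_pos {r : ℝ} (hr : 0 < r) : 0 < Real.logb 2 (1 + 1 / r) :=
  Real.logb_pos one_lt_two (lt_add_of_pos_right _ (by positivity))

lemma strictMonoOn_logGauge {C : ℝ} (hC : 0 < C) : StrictMonoOn (logGauge C) (Ici 0) := by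
  intro r hr s hs hrs
  have hs0 : 0 < s := lt_of_le_of_lt hr hrs
  have hls := logb_one_add_one_div_pos hs0
  rcases eq_or_lt_of_le (mem_Ici.1 hr) with rfl | hr0
  · rw [logGauge_zero, logGauge]
    positivity
  · refine div_lt_div_of_pos_left hC (Real.sqrt_pos.2 hls) (Real.sqrt_lt_sqrt hls.le ?_)
    refine Real.logb_lt_logb one_lt_two (by positivity) ?_
    gcongr

lemma continuousOn_logGauge (C : ℝ) : ContinuousOn (logGauge C) (Ici 0) := by
  intro r hr
  rcases eq_or_lt_of_le (mem_Ici.1 hr) with rfl | hr0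
  · have hlim : Tendsto (logGauge C) (𝓝[>] 0) (𝓝 0) := by
      refine Tendsto.div_atTop tendsto_const_nhds (Real.tendsto_sqrt_atTop.comp ?_)
      refine (Real.tendsto_logb_atTop one_lt_two).comp (tendsto_atTop_add_const_left _ _ ?_)
      exact (tendsto_inv_nhdsGT_zero (𝕜 := ℝ)).congr fun r ↦ (one_div r).symm
    rw [← Ioi_insert, continuousWithinAt_insert_self, ContinuousWithinAt, logGauge_zero]
    exact hlim
  · have hl := logb_one_add_one_div_pos hr0
    refine ContinuousAt.continuousWithinAt (ContinuousAt.div continuousAt_const ?_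
      (Real.sqrt_pos.2 hl).ne')
    refine Real.continuous_sqrt.continuousAt.comp ?_
    unfold Real.logb
    refine ContinuousAt.div_const (ContinuousAt.log ?_ (by positivity)) _
    fun_prop (disch := positivity)

lemma le_logGauge {C r : ℝ} (hC : 0 ≤ C) (hr : 0 < r) (hr' : r ≤ 1 / 2) :
    C * (4 + √(-Real.logb 2 r)) / (-Real.logb 2 r) ≤ logGauge (10 * C) r := by
  set L := -Real.logb 2 r with hL
  have hL1 : 1 ≤ L := by
    have := Real.logb_le_logb_of_le one_lt_two hr hr'
    rw [one_div, Real.logb_inv, Real.logb_self_eq_one one_lt_two] at this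
    linarith
  have hlog : Real.logb 2 (1 + 1 / r) ≤ 2 ^ 2 * L := by
    calc _ ≤ Real.logb 2 (2 / r) := by
          refine Real.logb_le_logb_of_le one_lt_two (by positivity) ?_
          have : 1 ≤ 1 / r := by rw [le_div_iff₀ hr]; linarith
          rw [show 2 / r = 1 / r + 1 / r by ring]
          linarith
      _ = 1 + L := by
          rw [Real.logb_div two_ne_zero hr.ne', Real.logb_self_eq_one one_lt_two]
          ring
      _ ≤ _ := by linarith
  have hsqrt : √(Real.logb 2 (1 + 1 / r)) ≤ 2 * √L := by
    refine (Real.sqrt_le_sqrt hlog).trans_eq ?_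
    rw [Real.sqrt_mul (by positivity), Real.sqrt_sq zero_le_two]
  have hpos := Real.sqrt_pos.2 (logb_one_add_one_div_pos hr)
  have hsL : 1 ≤ √L := Real.one_le_sqrt.2 hL1
  calc _ ≤ C * (5 * √L) / L := by
        gcongr
        linarith
    _ = 10 * C / (2 * √L) := by
        rw [div_eq_div_iff (by positivity) (by positivity)]
        nlinarith [Real.sq_sqrt (zero_le_one.trans hL1)]
    _ ≤ _ := by
        unfold logGauge
        gcongr

section Product

variable {θ : ℝ} {j : ℕ → ℕ}

lemma blockMeasure_closedBall_le_rpow (hθ : 1 < θ) (h0 : 1 ≤ j 0)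
    (hj : ∀ p, ⌈θ * j p⌉₊ ^ 2 ≤ j (p + 1)) {r : ℝ} (hr : 0 < r) (hr' : r ≤ 1) (x : ℝ) :
    blockMeasure θ j (closedBall x r) ≤
      ENNReal.ofReal (2 ^ (4 + √(-Real.logb 2 r) - (-Real.logb 2 r) / θ)) := by
  set L := -Real.logb 2 r with hL
  have hL0 : 0 ≤ L := neg_nonneg.2 (Real.logb_nonpos one_lt_two hr.le hr')
  have hrL : r = 2 ^ (-L) := by
    rw [hL, neg_neg, Real.rpow_logb zero_lt_two (by norm_num) hr]
  set n := ⌊L⌋₊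
  have hnL : (n : ℝ) ≤ L := Nat.floor_le hL0
  have hLn : L < n + 1 := Nat.lt_floor_add_one L
  have hrn : r ≤ (2 ^ n)⁻¹ := by
    rw [hrL, ← Real.rpow_natCast, ← Real.rpow_neg zero_le_two]
    gcongr
    exact one_le_two
  have hcount := le_freeCount hθ h0 hj n
  have hsq : √n ≤ √L := Real.sqrt_le_sqrt hnL
  have hdiv : L / θ ≤ n / θ + 1 := by
    rw [div_add_one (by positivity), div_le_div_iff_of_pos_right (by positivity)]
    linarith
  calc _ ≤ blockMeasure θ j (closedBall x (2 ^ n)⁻¹) :=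
        measure_mono (closedBall_subset_closedBall hrn)
    _ ≤ 4 * 2⁻¹ ^ freeCount θ j n := blockMeasure_closedBall_le θ j n x
    _ = ENNReal.ofReal (2 ^ (2 - (freeCount θ j n : ℝ))) := by
        rw [Real.rpow_sub zero_lt_two, Real.rpow_natCast, div_eq_mul_inv, ← inv_pow,
          ENNReal.ofReal_mul (by positivity), ENNReal.ofReal_pow (by positivity),
          ENNReal.ofReal_inv_of_pos zero_lt_two]
        norm_num
    _ ≤ _ := by
        refine ENNReal.ofReal_le_ofReal (Real.rpow_le_rpow_of_exponent_le one_le_two ?_)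
        linarith

/-- The law of `d` independent copies of `blockMeasure`. -/
def blockPiMeasure (d : ℕ) (θ : ℝ) (j : ℕ → ℕ) : Measure (Fin d → ℝ) :=
  Measure.pi fun _ ↦ blockMeasure θ j

instance (d : ℕ) (θ : ℝ) (j : ℕ → ℕ) : IsProbabilityMeasure (blockPiMeasure d θ j) := by
  unfold blockPiMeasure
  infer_instance

lemma blockPiMeasure_le_of_dist_le (d : ℕ) (hθ : 1 < θ) (h0 : 1 ≤ j 0)
    (hj : ∀ p, ⌈θ * j p⌉₊ ^ 2 ≤ j (p + 1)) {r : ℝ} (hr : 0 < r) (hr' : r ≤ 1 / 2)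
    {B : Set (Fin d → ℝ)} (hB : ∀ x ∈ B, ∀ y ∈ B, dist x y ≤ r) :
    blockPiMeasure d θ j B ≤ ENNReal.ofReal (r ^ (d / θ - logGauge (10 * d) r)) := by
  rcases B.eq_empty_or_nonempty with rfl | ⟨x, hx⟩
  · simp
  have hlogr : Real.logb 2 r < 0 := Real.logb_neg one_lt_two hr (by linarith)
  calc _ ≤ blockPiMeasure d θ j (Set.pi univ fun i ↦ closedBall (x i) r) := by
        rw [← closedBall_pi _ hr.le]
        exact measure_mono fun y hy ↦ hB y hy x hx
    _ = ∏ i, blockMeasure θ j (closedBall (x i) r) := Measure.pi_pi _ _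
    _ ≤ ∏ _i : Fin d, ENNReal.ofReal (2 ^ (4 + √(-Real.logb 2 r) - (-Real.logb 2 r) / θ)) :=
        Finset.prod_le_prod' fun i _ ↦
          blockMeasure_closedBall_le_rpow hθ h0 hj hr (by linarith) (x i)
    _ = ENNReal.ofReal
          (r ^ (d / θ - d * (4 + √(-Real.logb 2 r)) / (-Real.logb 2 r))) := by
        rw [Finset.prod_const, Finset.card_fin, ← ENNReal.ofReal_pow (by positivity),
          ← Real.rpow_mul_natCast zero_le_two]
        congr 1
        nth_rewrite 3 [← Real.rpow_logb zero_lt_two (by norm_num) hr]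
        rw [← Real.rpow_mul zero_le_two]
        congr 1
        have := hlogr.ne
        field_simp
        ring
    _ ≤ _ := by
        refine ENNReal.ofReal_le_ofReal (Real.rpow_le_rpow_of_exponent_ge hr (by linarith) ?_)
        have := le_logGauge (C := d) (by positivity) hr hr'
        linarith

lemma exists_logGauge_le (C : ℝ) {ε : ℝ} (hε : 0 < ε) :
    ∃ δ > 0, ∀ r, 0 ≤ r → r < δ → logGauge C r ≤ ε := by
  have h := continuousOn_logGauge C 0 self_mem_Ici
  rw [ContinuousWithinAt, logGauge_zero] at h
  obtain ⟨δ, hδ, h⟩ := Metric.mem_nhdsWithin_iff.1 (h.eventually (eventually_le_nhds hε))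
  refine ⟨δ, hδ, fun r hr hrδ ↦ h ⟨?_, hr⟩⟩
  rwa [mem_ball, Real.dist_eq, sub_zero, abs_of_nonneg hr]

lemma exists_blockPiMeasure_le_rpow (d : ℕ) (hθ : 1 < θ) (h0 : 1 ≤ j 0)
    (hj : ∀ p, ⌈θ * j p⌉₊ ^ 2 ≤ j (p + 1)) {s : ℝ} (hs : s < d / θ) :
    ∃ δ > 0, ∀ r, 0 < r → r < δ → ∀ B : Set (Fin d → ℝ), (∀ x ∈ B, ∀ y ∈ B, dist x y ≤ r) →
      blockPiMeasure d θ j B ≤ ENNReal.ofReal (r ^ s) := by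
  obtain ⟨δ, hδ, h⟩ := exists_logGauge_le (10 * d) (sub_pos.2 hs)
  refine ⟨min δ (1 / 2), by positivity, fun r hr hrδ B hB ↦ ?_⟩
  rw [lt_min_iff] at hrδ
  refine (blockPiMeasure_le_of_dist_le d hθ h0 hj hr hrδ.2.le hB).trans
    (ENNReal.ofReal_le_ofReal (Real.rpow_le_rpow_of_exponent_ge hr (by linarith) ?_))
  linarith [h r hr.le hrδ.1]

lemma blockPiMeasure_of_subsingleton {d : ℕ} (hd : 1 ≤ d) (hθ : 1 < θ) (h0 : 1 ≤ j 0)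
    (hj : ∀ p, ⌈θ * j p⌉₊ ^ 2 ≤ j (p + 1)) {B : Set (Fin d → ℝ)} (hB : B.Subsingleton) :
    blockPiMeasure d θ j B = 0 := by
  have hdθ : 0 < (d : ℝ) / θ := by positivity
  obtain ⟨δ, hδ, h⟩ := exists_blockPiMeasure_le_rpow d hθ h0 hj (half_lt_self hdθ)
  have hlim : Tendsto (fun r : ℝ ↦ ENNReal.ofReal (r ^ ((d : ℝ) / θ / 2))) (𝓝[>] 0) (𝓝 0) := by
    have : Tendsto (fun r : ℝ ↦ r ^ ((d : ℝ) / θ / 2)) (𝓝[>] 0) (𝓝 0) := by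
      have := (Real.continuousAt_rpow_const 0 ((d : ℝ) / θ / 2) (.inr (by positivity))).tendsto
      rw [Real.zero_rpow (by positivity)] at this
      exact this.mono_left nhdsWithin_le_nhds
    simpa using ENNReal.tendsto_ofReal this
  refine nonpos_iff_eq_zero.1 (ge_of_tendsto hlim ?_)
  filter_upwards [Ioo_mem_nhdsGT hδ] with r hr
  exact h r hr.1 hr.2 B fun x hx y hy ↦ by rw [hB hx hy, dist_self]; exact hr.1.le

lemma blockPiMeasure_toReal_le {d : ℕ} (hd : 1 ≤ d) (hθ : 1 < θ) (h0 : 1 ≤ j 0)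
    (hj : ∀ p, ⌈θ * j p⌉₊ ^ 2 ≤ j (p + 1)) {B : Set (Fin d → ℝ)} (hB : Bornology.IsBounded B)
    (hB' : diam B < 1 / 2) :
    (blockPiMeasure d θ j B).toReal ≤ diam B ^ (d / θ - logGauge (10 * d) (diam B)) := by
  rcases B.subsingleton_or_nontrivial with h | h
  · rw [blockPiMeasure_of_subsingleton hd hθ h0 hj h, ENNReal.toReal_zero]
    exact Real.rpow_nonneg diam_nonneg _
  · exact ENNReal.toReal_le_of_le_ofReal (Real.rpow_nonneg diam_nonneg _)
      (blockPiMeasure_le_of_dist_le d hθ h0 hj (diam_pos h hB) hB'.le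
        fun x hx y hy ↦ dist_le_diam_of_mem hB hx hy)

lemma le_dimH_of_blockPiMeasure_pos {d : ℕ} (hd : 1 ≤ d) (hθ : 1 < θ) (h0 : 1 ≤ j 0)
    (hj : ∀ p, ⌈θ * j p⌉₊ ^ 2 ≤ j (p + 1)) {E : Set (Fin d → ℝ)}
    (hE : 0 < blockPiMeasure d θ j E) : ENNReal.ofReal (d / θ) ≤ dimH E := by
  refine ENNReal.le_of_forall_nnreal_lt fun s hs ↦ ?_
  have hs : (s : ℝ) < d / θ := by
    rwa [← ENNReal.ofReal_coe_nnreal, ENNReal.ofReal_lt_ofReal_iff (by positivity)] at hs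
  obtain ⟨δ, hδ, h⟩ := exists_blockPiMeasure_le_rpow d hθ h0 hj hs
  refine le_dimH_of_hausdorffMeasure_ne_zero (ne_of_gt (hE.trans_le ?_))
  refine Measure.le_hausdorffMeasure (s : ℝ) (blockPiMeasure d θ j) (ENNReal.ofReal (δ / 2))
    (by simpa using hδ) (fun B hB ↦ ?_) E
  rcases B.subsingleton_or_nontrivial with hB' | hB'
  · simp [blockPiMeasure_of_subsingleton hd hθ h0 hj hB']
  have hne : ediam B ≠ ⊤ := (hB.trans_lt ENNReal.ofReal_lt_top).ne
  have hbdd : Bornology.IsBounded B := isBounded_iff_ediam_ne_top.2 hne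
  have hpos := diam_pos hB' hbdd
  have heq : ediam B = ENNReal.ofReal (diam B) := (ENNReal.ofReal_toReal hne).symm
  rw [heq, ENNReal.ofReal_rpow_of_pos hpos]
  rw [heq, ENNReal.ofReal_le_ofReal_iff (by positivity)] at hB
  exact h _ hpos (by linarith) B fun x hx y hy ↦ dist_le_diam_of_mem hbdd hx hy

lemma ae_blockMeasure (hθ : 1 < θ) (h0 : 1 ≤ j 0) (hj : ∀ p, ⌈θ * j p⌉₊ ^ 2 ≤ j (p + 1)) :
    ∀ᵐ x ∂blockMeasure θ j, x ∈ Icc 0 1 ∩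
      ⋂ p, ⋃ k : Fin (2 ^ j p), closedBall (((k : ℝ) + 1 / 2) / 2 ^ j p) (2 ^ (-(θ * j p))) := by
  rw [blockMeasure, ae_map_iff (measurable_ofDigits_forceDigits θ j).aemeasurable]
  · refine ae_of_all _ fun ω ↦ ⟨⟨Real.ofDigits_nonneg _, Real.ofDigits_le_one _⟩,
      mem_iInter.2 fun p ↦ mem_iUnion.2 ⟨⟨_, prefixVal_lt (forceDigits θ j ω) (j p)⟩, ?_⟩⟩
    exact abs_ofDigits_forceDigits_sub_le hθ h0 hj ω p
  · exact measurableSet_Icc.inter (MeasurableSet.iInter fun p ↦ MeasurableSet.iUnion fun k ↦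
      isClosed_closedBall.measurableSet)

lemma blockPiMeasure_compl_atheta (d : ℕ) (hθ : 1 < θ) (h0 : 1 ≤ j 0)
    (hj : ∀ p, ⌈θ * j p⌉₊ ^ 2 ≤ j (p + 1)) : blockPiMeasure d θ j (atheta d θ j)ᶜ = 0 := by
  have h : ∀ᵐ x ∂blockPiMeasure d θ j, ∀ i, x i ∈ Icc 0 1 ∩
      ⋂ p, ⋃ k : Fin (2 ^ j p), closedBall (((k : ℝ) + 1 / 2) / 2 ^ j p) (2 ^ (-(θ * j p))) :=
    ae_all_iff.2 fun i ↦ Measure.tendsto_eval_ae_ae.eventually (ae_blockMeasure hθ h0 hj)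
  refine mem_ae_iff.1 (h.mono fun x hx ↦ ?_)
  refine ⟨⟨fun i ↦ (hx i).1.1, fun i ↦ (hx i).1.2⟩, fun p ↦ ⟨p, le_rfl, ?_⟩⟩
  choose k hk using fun i ↦ mem_iUnion.1 (mem_iInter.1 (hx i).2 p)
  exact mem_iUnion.2 ⟨k, mem_closedBall.2 ((dist_pi_le_iff (by positivity)).2 hk)⟩

end Product

/-- A sequence growing fast enough for `⌈θ j p⌉ ^ 2 ≤ j (p + 1)`. -/
def fastSeq (θ : ℝ) (p : ℕ) : ℕ := (⌈θ⌉₊ ^ 2) ^ 3 ^ p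

lemma one_le_fastSeq {θ : ℝ} (hθ : 1 < θ) (p : ℕ) : 1 ≤ fastSeq θ p := by
  have : 0 < ⌈θ⌉₊ := Nat.ceil_pos.2 (by linarith)
  exact Nat.one_le_iff_ne_zero.2 (by unfold fastSeq; positivity)

lemma ceil_sq_le_fastSeq (θ : ℝ) (p : ℕ) :
    ⌈θ * fastSeq θ p⌉₊ ^ 2 ≤ fastSeq θ (p + 1) := by
  have hceil : ⌈θ * fastSeq θ p⌉₊ ≤ ⌈θ⌉₊ * fastSeq θ p := by
    rw [Nat.ceil_le]
    push_cast
    gcongr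
    exact Nat.le_ceil θ
  have hle : ⌈θ⌉₊ ^ 2 ≤ fastSeq θ p :=
    Nat.le_self_pow (by positivity) _
  calc _ ≤ (⌈θ⌉₊ * fastSeq θ p) ^ 2 := by gcongr
    _ = ⌈θ⌉₊ ^ 2 * fastSeq θ p ^ 2 := mul_pow _ _ _
    _ ≤ fastSeq θ p * fastSeq θ p ^ 2 := by gcongr
    _ = fastSeq θ (p + 1) := by rw [fastSeq, fastSeq, pow_succ 3 p, pow_mul]; ring

/-- For every `θ > 1` there exist a strictly increasing sequence `(j_p)` of
positive integers, a Borel probability measure `m` on `[0,1]^d` concentrated on `A_θ`, a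
continuous increasing gauge `ψ` with `ψ(0) = 0` and `η > 0` such that
`m(B) ≤ |B|^{d/θ - ψ(|B|)}` for every Borel set `B ⊆ [0,1]^d` of diameter `< η`.
Consequently every Borel set `E` with `m(E) > 0` satisfies `dim_H E ≥ d/θ`. -/
theorem exists_measure_on_atheta (d : ℕ) (hd : 1 ≤ d) (θ : ℝ) (hθ : 1 < θ) :
    ∃ j : ℕ → ℕ, StrictMono j ∧ (∀ p, 1 ≤ j p) ∧
    ∃ m : Measure (Fin d → ℝ), IsProbabilityMeasure m ∧ m (atheta d θ j)ᶜ = 0 ∧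
    ∃ ψ : ℝ → ℝ, ContinuousOn ψ (Set.Ici 0) ∧ StrictMonoOn ψ (Set.Ici 0) ∧ ψ 0 = 0 ∧
    ∃ η : ℝ, 0 < η ∧
      (∀ B : Set (Fin d → ℝ), B ⊆ Set.Icc 0 1 → MeasurableSet B → Metric.diam B < η →
        (m B).toReal ≤ Metric.diam B ^ ((d : ℝ) / θ - ψ (Metric.diam B))) ∧
      (∀ E : Set (Fin d → ℝ), MeasurableSet E → 0 < m E →
        ENNReal.ofReal ((d : ℝ) / θ) ≤ dimH E) := by
  have h0 := one_le_fastSeq hθ 0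
  have hj := ceil_sq_le_fastSeq θ
  exact ⟨fastSeq θ, strictMono_of_ceil_sq_le hθ h0 hj, one_le_fastSeq hθ,
    blockPiMeasure d θ (fastSeq θ), inferInstance, blockPiMeasure_compl_atheta d hθ h0 hj,
    logGauge (10 * d), continuousOn_logGauge _, strictMonoOn_logGauge (by positivity),
    logGauge_zero _, 1 / 2, by norm_num,
    fun B hB _ hB' ↦ blockPiMeasure_toReal_le hd hθ h0 hj ((isBounded_Icc 0 1).subset hB) hB',
    fun E _ hE ↦ le_dimH_of_blockPiMeasure_pos hd hθ h0 hj hE⟩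
end
end
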